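/- arXiv:1812.00247 — 3 statements merged into one kernel-verified Lean document; each statement's English description precedes it below -/
import Mathlib

section
/- Let L be an n-dimensional nilpotent Lie algebra of nilpotency class c ≥ 3 with dim L² = m such that dim M(L) = (1/2)(n−m−1)(n+m) − Σ_{i=2}^{min(n−m,c)} (n−m−i). If I is a one-dimensional ideal contained in Z(L) ∩ L², then dim M(L/I) = (1/2)(n−m−1)(n+m−2) − Σ_{i=2}^{min(n−m,c')} (n−m−i), where c' = cl(L/I); that is, dim M(L/I) attains the corresponding bound for L/I (which has dimension n−1 and derived subalgebra of dimension m−1). -/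
open Module

/-- The dimension of the Schur multiplier `M(L) = (R ∩ F²)/[R,F]` of a Lie algebra `L`,
computed from a free presentation `π : FreeLieAlgebra K X → L` (with `R = ker π` and
`F² = [F,F]`). -/
noncomputable def lieSchurMultiplierDim (K : Type) [Field K] (X : Type) {L : Type}
    [LieRing L] [LieAlgebra K L] (π : FreeLieAlgebra K X →ₗ⁅K⁆ L) : ℕ :=
  let F := FreeLieAlgebra K X
  let R : LieIdeal K F := π.ker
  let F2 : LieIdeal K F := LieModule.lowerCentralSeries K F F 1
  Module.finrank K
    (↥((R ⊓ F2 : LieIdeal K F) : Submodule K F) ⧸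
      (Submodule.comap ((R ⊓ F2 : LieIdeal K F) : Submodule K F).subtype
        ((⁅R, (⊤ : LieIdeal K F)⁆ : LieIdeal K F) : Submodule K F)))

/-- `L` is nilpotent of nilpotency class exactly `c`: in the paper's notation
`γ_{c+1}(L) = 0` and `γ_k(L) ≠ 0` for `k ≤ c` (Mathlib's `lowerCentralSeries` is indexed
so that `γ_{k+1}(L) = lowerCentralSeries K L L k`). -/
def lieNilpotencyClass (K : Type) [Field K] (L : Type) [LieRing L] [LieAlgebra K L]
    (c : ℕ) : Prop :=
  LieModule.lowerCentralSeries K L L c = ⊥ ∧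
    ∀ k < c, LieModule.lowerCentralSeries K L L k ≠ ⊥

/-- The dimension of the derived subalgebra `L² = [L,L]`. -/
noncomputable def lieDerivedDim (K : Type) [Field K] (L : Type) [LieRing L]
    [LieAlgebra K L] : ℕ :=
  Module.finrank K
    ↥((LieModule.lowerCentralSeries K L L 1 : LieSubmodule K L L) : Submodule K L)

/-- Rai's upper bound `(1/2)(n−m−1)(n+m) − Σ_{i=2}^{min(n−m,c)} (n−m−i)`. -/
def raiBound (n m c : ℕ) : ℤ :=
  ((n : ℤ) - m - 1) * ((n : ℤ) + m) / 2
    - ∑ i ∈ Finset.Icc 2 (min (n - m) c), ((n : ℤ) - m - (i : ℤ))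

/-!
Write `L = F/R` and `L/I = F/S` with `F` free. Comparing the chains `[R,F] ≤ R ∩ F² ≤ S ∩ F²` and
`[R,F] ≤ [S,F] ≤ S ∩ F²` gives `dim M(L) + 1 = dim M(L/I) + dim [S,F]/[R,F]`. If `s` spans `S`
modulo `R`, then `[S,F]` is the image of `[s, ·]` modulo `[R,F]`, and this map kills `S + F²`, so
the correction term is at most `dim L/L²`. If moreover the class drops from `c` to `c - 1`, then `s`
can be chosen to be a `c`-fold commutator, and the Jacobi identity shows that the brackets of `s`
with its `c` entries already span `[S,F]` modulo `[R,F]`, so the correction term is at most `c`.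
In both cases it exceeds the increment of Rai's bound from `L/I` to `L` by at most `1`. Hence Rai's
bound follows by induction along a central series, and if `L` attains it then so does `L/I`.

That `M(L)` does not depend on the free presentation comes down to this: an endomorphism of `F`
which induces the identity on `F/R` agrees with the identity on `F²` modulo `[R,F]`.
-/

open LieModule Cardinal

universe u v

theorem exists_natCast_eq_of_add_one_eq {a : Cardinal.{v}} {n : ℕ} (h : a + 1 = n) :
    ∃ k : ℕ, a = k ∧ n = k + 1 := by
  have hfin : a < ℵ₀ := (self_le_add_right a 1).trans_lt (h.trans_lt natCast_lt_aleph0)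
  obtain ⟨k, rfl⟩ := Cardinal.lt_aleph0.1 hfin
  exact ⟨k, rfl, by exact_mod_cast h.symm⟩

theorem raiBound_add_left (m d c : ℕ) :
    raiBound (m + d) m c =
      ((d : ℤ) - 1) * (d + 2 * m) / 2 - ∑ i ∈ Finset.Icc 2 (min d c), ((d : ℤ) - i) := by
  have hd : ((m + d : ℕ) : ℤ) - m = d := by push_cast; ring
  have hdm : ((m + d : ℕ) : ℤ) + m = d + 2 * m := by push_cast; ring
  rw [raiBound, hd, hdm, Nat.add_sub_cancel_left]

theorem raiBound_succ_derived (m d c : ℕ) :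
    raiBound (m + 1 + d) (m + 1) c = raiBound (m + d) m c + d - 1 := by
  have hmul : ((d : ℤ) - 1) * (d + 2 * (m + 1 : ℕ)) = (d - 1) * (d + 2 * m) + (d - 1) * 2 := by
    push_cast
    ring
  rw [raiBound_add_left, raiBound_add_left, hmul, Int.add_mul_ediv_right _ _ two_ne_zero]
  ring

theorem raiBound_succ_class (m d : ℕ) {c : ℕ} (hc : 1 ≤ c) :
    raiBound (m + d) m (c + 1) = raiBound (m + d) m c + (min d (c + 1) : ℕ) - d := by
  rw [raiBound_add_left, raiBound_add_left]
  rcases le_or_gt (c + 1) d with hcd | hdc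
  · rw [min_eq_right hcd, min_eq_right (c.le_succ.trans hcd),
      Finset.sum_Icc_succ_top (by omega : 2 ≤ c + 1)]
    push_cast
    ring
  · rw [min_eq_left hdc.le, min_eq_left (Nat.lt_succ_iff.1 hdc)]
    ring

theorem raiBound_abelian (d : ℕ) {c : ℕ} (hc : c ≤ 1) : raiBound d 0 c = (d - 1) * d / 2 := by
  have hempty : Finset.Icc 2 (min d c) = ∅ := Finset.Icc_eq_empty (by omega)
  simpa [hempty] using raiBound_add_left 0 d c

theorem raiBound_abelian_succ (d : ℕ) {c c' : ℕ} (hc : c ≤ 1) (hc' : c' ≤ 1) :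
    raiBound (d + 1) 0 c = raiBound d 0 c' + d := by
  have hmul : (((d + 1 : ℕ) : ℤ) - 1) * (d + 1 : ℕ) = (d - 1) * d + d * 2 := by
    push_cast
    ring
  rw [raiBound_abelian _ hc, raiBound_abelian _ hc', hmul, Int.add_mul_ediv_right _ _ two_ne_zero]

theorem raiBound_eq_of_succ_succ (n m c : ℕ) :
    raiBound n m c =
      (((n + 1 : ℕ) : ℤ) - (m + 1 : ℕ) - 1) * (((n + 1 : ℕ) : ℤ) + (m + 1 : ℕ) - 2) / 2 -
        ∑ i ∈ Finset.Icc 2 (min (n + 1 - (m + 1)) c), (((n + 1 : ℕ) : ℤ) - (m + 1 : ℕ) - i) := by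
  have hsub : ((n + 1 : ℕ) : ℤ) - (m + 1 : ℕ) = n - m := by push_cast; ring
  have hadd : ((n + 1 : ℕ) : ℤ) + (m + 1 : ℕ) - 2 = n + m := by push_cast; ring
  rw [raiBound, hsub, hadd, Nat.add_sub_add_right]

section RelativeRank

variable {K : Type u} [Field K] {V W : Type v} [AddCommGroup V] [Module K V] [AddCommGroup W]
  [Module K W] {A B C : Submodule K V}

/-- The dimension of `(A + B) / A`, that is, of `B / (A ∩ B)`; neither subspace need contain the
other. -/
noncomputable def relRank (A B : Submodule K V) : Cardinal.{v} :=
  Module.rank K (B.map A.mkQ)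

theorem rank_quotient_comap_subtype (A B : Submodule K V) :
    Module.rank K (B ⧸ A.comap B.subtype) = relRank A B := by
  have hker : LinearMap.ker (A.mkQ ∘ₗ B.subtype) = A.comap B.subtype := by
    rw [LinearMap.ker_comp, A.ker_mkQ]
  have hrange : LinearMap.range (A.mkQ ∘ₗ B.subtype) = B.map A.mkQ := by
    rw [LinearMap.range_comp, B.range_subtype]
  rw [relRank, ← hker, ← hrange]
  exact (A.mkQ ∘ₗ B.subtype).quotKerEquivRange.rank_eq

theorem relRank_inf_left (A B : Submodule K V) : relRank (A ⊓ B) B = relRank A B := by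
  rw [← rank_quotient_comap_subtype, ← rank_quotient_comap_subtype, Submodule.comap_inf,
    Submodule.comap_subtype_self, inf_top_eq]

theorem relRank_sup_right (A B : Submodule K V) : relRank A (A ⊔ B) = relRank A B := by
  rw [relRank, Submodule.map_sup, Submodule.mkQ_map_self, bot_sup_eq, relRank]

theorem relRank_eq_zero_iff : relRank A B = 0 ↔ B ≤ A := by
  rw [relRank, Submodule.rank_eq_zero, ← le_bot_iff, Submodule.map_le_iff_le_comap,
    Submodule.comap_bot, A.ker_mkQ]

theorem relRank_ker (f : V →ₗ[K] W) (B : Submodule K V) :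
    relRank (LinearMap.ker f) B = Module.rank K (B.map f) := by
  have hinj : Function.Injective ((LinearMap.ker f).liftQ f le_rfl) :=
    LinearMap.ker_eq_bot.1 (Submodule.ker_liftQ_eq_bot _ _ _ le_rfl)
  have hmap : (B.map (LinearMap.ker f).mkQ).map ((LinearMap.ker f).liftQ f le_rfl) = B.map f := by
    rw [← Submodule.map_comp, Submodule.liftQ_mkQ]
  rw [relRank, ← hmap]
  exact (Submodule.equivMapOfInjective _ hinj _).rank_eq

theorem relRank_le_relRank_of_map {A' B' : Submodule K W} (f : V →ₗ[K] W) (hA : A ≤ A'.comap f)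
    (hB : B' ≤ A' ⊔ B.map f) : relRank A' B' ≤ relRank A B := by
  have hmap : B'.map A'.mkQ ≤ (B.map A.mkQ).map (A.mapQ A' f hA) := by
    rw [← Submodule.map_comp, Submodule.mapQ_mkQ, Submodule.map_comp]
    refine (Submodule.map_mono hB).trans ?_
    rw [Submodule.map_sup, Submodule.mkQ_map_self, bot_sup_eq]
  exact (Submodule.rank_mono hmap).trans (rank_map_le _ _)

theorem relRank_add_relRank (hAB : A ≤ B) (hBC : B ≤ C) :
    relRank A B + relRank B C = relRank A C := by
  let f := (Submodule.factor hAB).domRestrict (C.map A.mkQ)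
  have hrange : LinearMap.range f = C.map B.mkQ := by
    rw [LinearMap.range_domRestrict, ← Submodule.map_comp]
    rfl
  have hker : LinearMap.ker f = (B.map A.mkQ).comap (C.map A.mkQ).subtype := by
    rw [LinearMap.ker_domRestrict]
    congr 1
    rw [Submodule.factor, Submodule.mapQ, Submodule.ker_liftQ, LinearMap.comp_id, B.ker_mkQ]
  have hrank := LinearMap.rank_range_add_rank_ker f
  rw [hrange, hker, (Submodule.comapSubtypeEquivOfLe (Submodule.map_mono hBC)).rank_eq] at hrank
  rw [add_comm]
  exact hrank

theorem relRank_le_mk_of_le_sup_span {s : Set V} (h : B ≤ A ⊔ Submodule.span K s) :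
    relRank A B ≤ #s := by
  have hmap : B.map A.mkQ ≤ Submodule.span K (A.mkQ '' s) := by
    rw [← Submodule.map_span]
    refine (Submodule.map_mono h).trans ?_
    rw [Submodule.map_sup, Submodule.mkQ_map_self, bot_sup_eq]
  exact (Submodule.rank_mono hmap).trans ((rank_span_le _).trans mk_image_le)

theorem relRank_sup_span_singleton {s : V} (hs : s ∉ A) :
    relRank A (A ⊔ Submodule.span K {s}) = 1 := by
  apply le_antisymm
  · simpa using relRank_le_mk_of_le_sup_span (le_refl (A ⊔ Submodule.span K {s}))
  · rw [Cardinal.one_le_iff_ne_zero, Ne, relRank_eq_zero_iff]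
    exact fun h ↦ hs (h (Submodule.mem_sup_right (Submodule.mem_span_singleton_self s)))

theorem eq_sup_span_singleton_of_relRank_eq_one (hAB : A ≤ B) (h : relRank A B = 1) {s : V}
    (hsB : s ∈ B) (hsA : s ∉ A) : B = A ⊔ Submodule.span K {s} := by
  have hle : A ⊔ Submodule.span K {s} ≤ B :=
    sup_le hAB ((Submodule.span_singleton_le_iff_mem _ _).2 hsB)
  have hadd := relRank_add_relRank le_sup_left hle
  rw [relRank_sup_span_singleton hsA, h, add_comm] at hadd
  have hzero := Cardinal.add_one_inj.1 (hadd.trans (zero_add 1).symm)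
  exact le_antisymm (relRank_eq_zero_iff.1 hzero) hle

theorem relRank_inf_inf_of_le_sup {D : Submodule K V} (hAB : A ≤ B) (hBD : B ≤ A ⊔ D) :
    relRank (A ⊓ D) (B ⊓ D) = relRank A B := by
  have hinf : A ⊓ (B ⊓ D) = A ⊓ D := by rw [← inf_assoc, inf_eq_left.2 hAB]
  have hsup : A ⊔ B ⊓ D = B := by
    rw [inf_comm, ← sup_inf_assoc_of_le D hAB, inf_eq_right.2 hBD]
  rw [← hinf, relRank_inf_left, ← relRank_sup_right, hsup]

end RelativeRank

section LieIdeals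

variable {K : Type*} [CommRing K] {F : Type*} [LieRing F] [LieAlgebra K F] {R S : LieIdeal K F}

local notation "γ" => lowerCentralSeries K F F

/-- The ideal `[R, F]` of `F`. -/
abbrev lieTop (R : LieIdeal K F) : LieIdeal K F := ⁅R, (⊤ : LieIdeal K F)⁆

theorem lie_mem_lieTop {r : F} (hr : r ∈ R) (x : F) : ⁅r, x⁆ ∈ lieTop R :=
  LieSubmodule.lie_mem_lie hr (LieSubmodule.mem_top x)

theorem lie_mem_lieTop' {r : F} (hr : r ∈ R) (x : F) : ⁅x, r⁆ ∈ lieTop R := by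
  rw [lieTop, LieSubmodule.lie_comm]
  exact LieSubmodule.lie_mem_lie (LieSubmodule.mem_top x) hr

theorem lieTop_toSubmodule_le_iff {W : Submodule K F} :
    (lieTop R).toSubmodule ≤ W ↔ ∀ r ∈ R, ∀ x : F, ⁅r, x⁆ ∈ W := by
  rw [LieSubmodule.lieIdeal_oper_eq_linear_span', Submodule.span_le]
  constructor
  · exact fun h r hr x ↦ h ⟨r, hr, x, LieSubmodule.mem_top x, rfl⟩
  · rintro h _ ⟨r, hr, x, -, rfl⟩
    exact h r hr x

theorem lie_mem_of_mem_sup_span {s w x : F} {V : Submodule K F}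
    (hS : S.toSubmodule = R.toSubmodule ⊔ Submodule.span K {s}) (hR : (lieTop R).toSubmodule ≤ V)
    (hw : w ∈ S) (hsx : ⁅s, x⁆ ∈ V) : ⁅w, x⁆ ∈ V := by
  rw [← LieSubmodule.mem_toSubmodule, hS] at hw
  obtain ⟨r, hr, _, hts, rfl⟩ := Submodule.mem_sup.1 hw
  obtain ⟨t, rfl⟩ := Submodule.mem_span_singleton.1 hts
  rw [add_lie, smul_lie]
  exact add_mem (hR (lie_mem_lieTop hr x)) (Submodule.smul_mem _ t hsx)

theorem lieTop_toSubmodule_le_of_lie_mem {s : F} {V : Submodule K F}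
    (hS : S.toSubmodule = R.toSubmodule ⊔ Submodule.span K {s}) (hR : (lieTop R).toSubmodule ≤ V)
    (hs : ∀ x, ⁅s, x⁆ ∈ V) : (lieTop S).toSubmodule ≤ V :=
  lieTop_toSubmodule_le_iff.2 fun _ hw x ↦ lie_mem_of_mem_sup_span hS hR hw (hs x)

theorem lie_sub_lie_mem_lieTop {x x' y y' : F} (hx : x' - x ∈ R)
    (hy : y' - y ∈ R) : ⁅x', y'⁆ - ⁅x, y⁆ ∈ lieTop R := by
  have heq : ⁅x', y'⁆ - ⁅x, y⁆ = ⁅x' - x, y'⁆ + ⁅x, y' - y⁆ := by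
    rw [sub_lie, lie_sub]
    abel
  rw [heq]
  exact add_mem (lie_mem_lieTop hx y') (lie_mem_lieTop' hy x)

theorem lie_mem_lowerCentralSeries_succ {k : ℕ} {w : F} (x : F) (hw : w ∈ γ k) :
    ⁅x, w⁆ ∈ γ (k + 1) := by
  rw [lowerCentralSeries_succ]
  exact LieSubmodule.lie_mem_lie (LieSubmodule.mem_top x) hw

theorem lie_mem_lowerCentralSeries_succ' {k : ℕ} {w : F} (hw : w ∈ γ k) (x : F) :
    ⁅w, x⁆ ∈ γ (k + 1) := by
  rw [← lie_skew]
  exact neg_mem (lie_mem_lowerCentralSeries_succ x hw)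

theorem lowerCentralSeries_succ_toSubmodule_le_iff {k : ℕ} {W : Submodule K F} :
    (γ (k + 1)).toSubmodule ≤ W ↔ ∀ x : F, ∀ w ∈ γ k, ⁅x, w⁆ ∈ W := by
  rw [lowerCentralSeries_succ, LieSubmodule.lieIdeal_oper_eq_linear_span', Submodule.span_le]
  constructor
  · exact fun h x w hw ↦ h ⟨x, LieSubmodule.mem_top x, w, hw, rfl⟩
  · rintro h _ ⟨x, -, w, hw, rfl⟩
    exact h x w hw

theorem lowerCentralSeries_one_toSubmodule_le_iff {W : Submodule K F} :
    (γ 1).toSubmodule ≤ W ↔ ∀ x y : F, ⁅x, y⁆ ∈ W := by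
  simp only [lowerCentralSeries_succ_toSubmodule_le_iff, lowerCentralSeries_zero,
    LieSubmodule.mem_top, true_imp_iff]

theorem lie_mem_lowerCentralSeries_add {j k : ℕ} {y w : F} (hy : y ∈ γ j) (hw : w ∈ γ k) :
    ⁅y, w⁆ ∈ γ (k + j + 1) := by
  induction k generalizing j y w with
  | zero =>
    rw [zero_add]
    exact lie_mem_lowerCentralSeries_succ' hy w
  | succ k ih =>
    suffices (γ (k + 1)).toSubmodule ≤
        (γ (k + 1 + j + 1)).toSubmodule.comap (LieAlgebra.ad K F y : F →ₗ[K] F) from this hw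
    refine lowerCentralSeries_succ_toSubmodule_le_iff.2 fun a v hv ↦ ?_
    rw [Submodule.mem_comap, LieAlgebra.ad_apply, leibniz_lie, add_right_comm k 1 j]
    exact add_mem (ih (lie_mem_lowerCentralSeries_succ' hy a) hv)
      (lie_mem_lowerCentralSeries_succ a (ih hy hv))

theorem sup_lowerCentralSeries_one_le_comap_ad {s : F} (hs : ∀ x, ⁅s, x⁆ ∈ R)
    (hS : S.toSubmodule = R.toSubmodule ⊔ Submodule.span K {s}) :
    (S ⊔ γ 1).toSubmodule ≤ (lieTop R).toSubmodule.comap (LieAlgebra.ad K F s) := by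
  rw [LieSubmodule.sup_toSubmodule, hS]
  refine sup_le (sup_le (fun r hr ↦ lie_mem_lieTop' hr s) ?_) ?_
  · rw [Submodule.span_singleton_le_iff_mem, Submodule.mem_comap, LieAlgebra.ad_apply, lie_self]
    exact zero_mem _
  · refine lowerCentralSeries_one_toSubmodule_le_iff.2 fun x y ↦ ?_
    rw [Submodule.mem_comap, LieAlgebra.ad_apply, leibniz_lie]
    exact add_mem (lie_mem_lieTop (hs x) y) (lie_mem_lieTop' (hs y) x)

theorem map_sub_self_mem_lieTop (θ : F →ₗ⁅K⁆ F) (hθ : ∀ y, θ y - y ∈ R) {y : F}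
    (hy : y ∈ γ 1) : θ y - y ∈ lieTop R := by
  suffices (γ 1).toSubmodule ≤
      (lieTop R).toSubmodule.comap ((θ : F →ₗ[K] F) - LinearMap.id) from this hy
  refine lowerCentralSeries_one_toSubmodule_le_iff.2 fun a b ↦ ?_
  change θ ⁅a, b⁆ - ⁅a, b⁆ ∈ lieTop R
  rw [LieHom.map_lie]
  exact lie_sub_lie_mem_lieTop (hθ a) (hθ b)

/-- The right-normed bracket `[a₁, [a₂, …, [aₖ, x]…]]` for `l = [a₁, …, aₖ]`. -/
def nestedBracket (l : List F) (x : F) : F := l.foldr (⁅·, ·⁆) x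

theorem nestedBracket_mem_lowerCentralSeries (l : List F) (x : F) :
    nestedBracket l x ∈ γ l.length := by
  induction l with
  | nil => exact LieSubmodule.mem_top x
  | cons a l ih => exact lie_mem_lowerCentralSeries_succ a ih

theorem lowerCentralSeries_le_span_nestedBracket (k : ℕ) :
    (γ k).toSubmodule ≤
      Submodule.span K {s | ∃ (l : List F) (x : F), l.length = k ∧ nestedBracket l x = s} := by
  induction k with
  | zero => exact fun x _ ↦ Submodule.subset_span ⟨[], x, rfl, rfl⟩
  | succ k ih =>
    refine lowerCentralSeries_succ_toSubmodule_le_iff.2 fun a w hw ↦ ?_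
    have hspan : Submodule.span K
        {s | ∃ (l : List F) (x : F), l.length = k ∧ nestedBracket l x = s} ≤ (Submodule.span K
        {s | ∃ (l : List F) (x : F), l.length = k + 1 ∧ nestedBracket l x = s}).comap
        (LieAlgebra.ad K F a : F →ₗ[K] F) := by
      rw [Submodule.span_le]
      rintro _ ⟨l, x, rfl, rfl⟩
      exact Submodule.subset_span ⟨a :: l, x, rfl, rfl⟩
    exact hspan (ih hw)

theorem exists_nestedBracket_notMem {k : ℕ} (hk : ¬ γ k ≤ R) :
    ∃ (l : List F) (x : F), l.length = k ∧ nestedBracket l x ∉ R := by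
  contrapose! hk
  refine (lowerCentralSeries_le_span_nestedBracket k).trans (Submodule.span_le.2 ?_)
  rintro _ ⟨l, x, hl, rfl⟩
  exact hk l x hl

theorem lie_nestedBracket_mem_span (l : List F) (x : F) {j : ℕ} {y : F} (hy : y ∈ γ j) :
    ⁅y, nestedBracket l x⁆ ∈
      Submodule.span K {z | ∃ a ∈ x :: l, ∃ w ∈ γ (l.length + j), ⁅w, a⁆ = z} := by
  induction l generalizing j y with
  | nil =>
    have hy : y ∈ γ (List.length ([] : List F) + j) := by rwa [List.length_nil, zero_add]
    exact Submodule.subset_span ⟨x, List.mem_singleton_self x, y, hy, rfl⟩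
  | cons b l ih =>
    have hlength : (b :: l).length + j = l.length + j + 1 := by rw [List.length_cons]; omega
    change ⁅y, ⁅b, nestedBracket l x⁆⁆ ∈ _
    rw [leibniz_lie, ← lie_skew b, hlength]
    refine add_mem ?_ (neg_mem (Submodule.subset_span ⟨b, by simp, _, ?_, rfl⟩))
    · refine Submodule.span_mono ?_ (ih (lie_mem_lowerCentralSeries_succ' hy b))
      rintro _ ⟨a, ha, w, hw, rfl⟩
      exact ⟨a, List.cons_subset_cons x (List.subset_cons_self b l) ha, w, hw, rfl⟩
    · exact lie_mem_lowerCentralSeries_add hy (nestedBracket_mem_lowerCentralSeries l x)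

theorem lieTop_toSubmodule_le_of_lie_entry_mem {l : List F} {x : F} {V : Submodule K F}
    (hS : S.toSubmodule = R.toSubmodule ⊔ Submodule.span K {nestedBracket l x})
    (hl : γ l.length ≤ S) (hR : (lieTop R).toSubmodule ≤ V)
    (hV : ∀ a ∈ x :: l, ⁅nestedBracket l x, a⁆ ∈ V) : (lieTop S).toSubmodule ≤ V := by
  have hspan : Submodule.span K {z | ∃ a ∈ x :: l, ∃ w ∈ γ (l.length + 0), ⁅w, a⁆ = z} ≤ V := by
    rw [Submodule.span_le]
    rintro _ ⟨a, ha, w, hw, rfl⟩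
    exact lie_mem_of_mem_sup_span hS hR (hl hw) (hV a ha)
  refine lieTop_toSubmodule_le_of_lie_mem hS hR fun y ↦ ?_
  rw [← lie_skew]
  exact neg_mem (hspan (lie_nestedBracket_mem_span l x (LieSubmodule.mem_top y)))

end LieIdeals

section SurjectiveLieHoms

variable {K : Type*} [CommRing K] {F L : Type*} [LieRing F] [LieAlgebra K F] [LieRing L]
  [LieAlgebra K L] {π : F →ₗ⁅K⁆ L}

theorem lowerCentralSeries_le_ker_iff (hπ : Function.Surjective π) (k : ℕ) :
    lowerCentralSeries K F F k ≤ π.ker ↔ lowerCentralSeries K L L k = ⊥ := by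
  rw [← LieIdeal.map_eq_bot_iff, LieIdeal.lowerCentralSeries_map_eq k hπ]

theorem map_lowerCentralSeries_toSubmodule (hπ : Function.Surjective π) (k : ℕ) :
    (lowerCentralSeries K F F k).toSubmodule.map (π : F →ₗ[K] L) =
      (lowerCentralSeries K L L k).toSubmodule := by
  rw [← LieIdeal.lowerCentralSeries_map_eq k hπ, LieIdeal.coe_map_of_surjective hπ]

theorem comap_le_ker_sup_lowerCentralSeries (hπ : Function.Surjective π) {I : LieIdeal K L} {k : ℕ}
    (hI : I ≤ lowerCentralSeries K L L k) : I.comap π ≤ π.ker ⊔ lowerCentralSeries K F F k := by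
  rw [sup_comm, ← LieIdeal.comap_map_eq, LieIdeal.lowerCentralSeries_map_eq k hπ]
  · exact LieIdeal.comap_mono hI
  · rw [← LieSubmodule.coe_toSubmodule, LieIdeal.coe_map_of_surjective hπ]
    rfl

/-- The canonical projection as a morphism of Lie algebras; Mathlib's `LieSubmodule.Quotient.mk'`
is only a morphism of `L`-modules. -/
def quotientLieHom (I : LieIdeal K L) : L →ₗ⁅K⁆ L ⧸ I :=
  { (LieSubmodule.Quotient.mk' I : L →ₗ[K] L ⧸ I) with
    map_lie' := fun {x y} ↦ LieSubmodule.Quotient.mk_bracket I x y }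

theorem quotientLieHom_surjective (I : LieIdeal K L) : Function.Surjective (quotientLieHom I) :=
  LieSubmodule.Quotient.surjective_mk' I

theorem ker_quotientLieHom_comp (I : LieIdeal K L) (π : F →ₗ⁅K⁆ L) :
    ((quotientLieHom I).comp π).ker = I.comap π := by
  ext x
  exact LieSubmodule.Quotient.mk_eq_zero (N := I) (m := π x)

theorem exists_comp_eq_of_surjective {X : Type*} (π : FreeLieAlgebra K X →ₗ⁅K⁆ L)
    {ρ : F →ₗ⁅K⁆ L} (hρ : Function.Surjective ρ) :
    ∃ φ : FreeLieAlgebra K X →ₗ⁅K⁆ F, ρ.comp φ = π := by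
  choose f hf using fun x ↦ hρ (π (FreeLieAlgebra.of K x))
  refine ⟨FreeLieAlgebra.lift K f, FreeLieAlgebra.hom_ext fun x ↦ ?_⟩
  rw [LieHom.comp_apply, FreeLieAlgebra.lift_of_apply, hf]

end SurjectiveLieHoms

section PresentationIdeals

variable {K : Type u} [Field K] {F : Type v} [LieRing F] [LieAlgebra K F] {R S : LieIdeal K F}
  {c c' m d : ℕ}

local notation "γ" => lowerCentralSeries K F F

/-- The dimension of `(R ∩ F²) / [R, F]`, which for free `F` is the Schur multiplier of `F / R`. -/
noncomputable def multiplierRank (R : LieIdeal K F) : Cardinal.{v} :=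
  relRank (lieTop R).toSubmodule (R ⊓ γ 1).toSubmodule

/-- `S / R` is a one-dimensional central ideal of `F / R`. -/
structure IsCentralLine (R S : LieIdeal K F) : Prop where
  le : R ≤ S
  lieTop_le : lieTop S ≤ R
  relRank_eq_one : relRank R.toSubmodule S.toSubmodule = 1

theorem multiplierRank_add_relRank_inf (hRS : R ≤ S) (hcentral : lieTop S ≤ R) :
    multiplierRank R + relRank (R ⊓ γ 1).toSubmodule (S ⊓ γ 1).toSubmodule =
      multiplierRank S + relRank (lieTop R).toSubmodule (lieTop S).toSubmodule := by
  have hlie : lieTop R ≤ lieTop S := LieSubmodule.mono_lie_left _ hRS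
  have hlieR : lieTop S ≤ R ⊓ γ 1 :=
    le_inf hcentral (LieSubmodule.mono_lie_left _ le_top)
  have hinf : R ⊓ γ 1 ≤ S ⊓ γ 1 := inf_le_inf_right _ hRS
  rw [add_comm (multiplierRank S), multiplierRank, multiplierRank,
    relRank_add_relRank (hlie.trans hlieR) hinf, relRank_add_relRank hlie (hlieR.trans hinf)]

theorem IsCentralLine.eq_sup_span_singleton (h : IsCentralLine R S) {s : F} (hsS : s ∈ S)
    (hsR : s ∉ R) : S.toSubmodule = R.toSubmodule ⊔ Submodule.span K {s} :=
  eq_sup_span_singleton_of_relRank_eq_one h.le h.relRank_eq_one hsS hsR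

theorem IsCentralLine.exists_mem_notMem (h : IsCentralLine R S) : ∃ s ∈ S, s ∉ R := by
  refine SetLike.not_le_iff_exists.1 fun hle ↦ one_ne_zero (α := Cardinal.{v}) ?_
  rw [← h.relRank_eq_one, relRank_eq_zero_iff]
  exact hle

theorem IsCentralLine.relRank_lieTop_le_abelianization (h : IsCentralLine R S) :
    relRank (lieTop R).toSubmodule (lieTop S).toSubmodule ≤ relRank (S ⊔ γ 1).toSubmodule ⊤ := by
  obtain ⟨s, hsS, hsR⟩ := h.exists_mem_notMem
  have hS := h.eq_sup_span_singleton hsS hsR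
  have hs (x : F) : ⁅s, x⁆ ∈ R := h.lieTop_le (lie_mem_lieTop hsS x)
  have hmap : (lieTop S).toSubmodule ≤
      (lieTop R).toSubmodule ⊔ (⊤ : Submodule K F).map (LieAlgebra.ad K F s : F →ₗ[K] F) :=
    lieTop_toSubmodule_le_of_lie_mem hS le_sup_left fun x ↦
      Submodule.mem_sup_right (Submodule.mem_map_of_mem (Submodule.mem_top (x := x)))
  exact relRank_le_relRank_of_map _ (sup_lowerCentralSeries_one_le_comap_ad hs hS) hmap

theorem IsCentralLine.relRank_lieTop_le_succ (h : IsCentralLine R S) {k : ℕ} (hkS : γ k ≤ S)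
    (hkR : ¬ γ k ≤ R) :
    relRank (lieTop R).toSubmodule (lieTop S).toSubmodule ≤ (k + 1 : ℕ) := by
  obtain ⟨l, x, rfl, hlR⟩ := exists_nestedBracket_notMem hkR
  have hS := h.eq_sup_span_singleton (hkS (nestedBracket_mem_lowerCentralSeries l x)) hlR
  let bracket (i : Fin (x :: l).length) : F := ⁅nestedBracket l x, (x :: l).get i⁆
  have hle : (lieTop S).toSubmodule ≤
      (lieTop R).toSubmodule ⊔ Submodule.span K (Set.range bracket) := by
    refine lieTop_toSubmodule_le_of_lie_entry_mem hS hkS le_sup_left fun a ha ↦ ?_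
    obtain ⟨i, rfl⟩ := List.mem_iff_get.1 ha
    exact Submodule.mem_sup_right (Submodule.subset_span ⟨i, rfl⟩)
  have hcard := mk_range_le_lift (f := bracket)
  exact (relRank_le_mk_of_le_sup_span hle).trans (by simpa using hcard)

/-- `F / R` has derived subalgebra of dimension `m`, abelianization of dimension `d` (hence
dimension `m + d`) and nilpotency class `c`, everything being expressed inside `F`. -/
structure QuotientInvariants (R : LieIdeal K F) (m d c : ℕ) : Prop where
  relRank_derived : relRank R.toSubmodule (γ 1).toSubmodule = m
  relRank_abelianization : relRank (R ⊔ γ 1).toSubmodule ⊤ = d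
  isLeast_class : IsLeast {k | γ k ≤ R} c

theorem QuotientInvariants.two_le_class (hR : QuotientInvariants R (m + 1) d c) : 2 ≤ c := by
  by_contra! hc
  have hab : γ 1 ≤ R := (antitone_lowerCentralSeries K F F (by omega)).trans hR.isLeast_class.1
  have hzero : ((m + 1 : ℕ) : Cardinal.{v}) = 0 :=
    hR.relRank_derived ▸ relRank_eq_zero_iff.2 hab
  exact m.succ_ne_zero (by exact_mod_cast hzero)

theorem IsCentralLine.class_eq_or_eq_succ (h : IsCentralLine R S)
    (hc : IsLeast {k | γ k ≤ R} c) (hc' : IsLeast {k | γ k ≤ S} c') : c = c' ∨ c = c' + 1 := by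
  have hle : c' ≤ c := hc'.2 (hc.1.trans h.le)
  have hsucc : γ (c' + 1) ≤ R := by
    rw [lowerCentralSeries_succ, LieSubmodule.lie_comm]
    exact (LieSubmodule.mono_lie_left _ hc'.1).trans h.lieTop_le
  have hge : c ≤ c' + 1 := hc.2 hsucc
  omega

theorem IsCentralLine.multiplierRank_add_one (h : IsCentralLine R S) (hS : S ≤ R ⊔ γ 1) :
    multiplierRank R + 1 =
      multiplierRank S + relRank (lieTop R).toSubmodule (lieTop S).toSubmodule := by
  have hS' : S.toSubmodule ≤ R.toSubmodule ⊔ (γ 1).toSubmodule := by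
    rw [← LieSubmodule.sup_toSubmodule]
    exact hS
  rw [← multiplierRank_add_relRank_inf h.le h.lieTop_le, LieSubmodule.inf_toSubmodule,
    LieSubmodule.inf_toSubmodule, relRank_inf_inf_of_le_sup h.le hS', h.relRank_eq_one]

theorem IsCentralLine.exists_relRank_lieTop_eq_le (h : IsCentralLine R S)
    (hS : QuotientInvariants S m d c') :
    ∃ e : ℕ, relRank (lieTop R).toSubmodule (lieTop S).toSubmodule = e ∧ e ≤ d := by
  have hle := h.relRank_lieTop_le_abelianization
  rw [hS.relRank_abelianization] at hle
  obtain ⟨e, he⟩ := Cardinal.lt_aleph0.1 (hle.trans_lt natCast_lt_aleph0)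
  exact ⟨e, he, by exact_mod_cast he ▸ hle⟩

theorem IsCentralLine.exists_relRank_lieTop_eq_add_raiBound_le (h : IsCentralLine R S)
    (hR : QuotientInvariants R (m + 1) d c) (hS : QuotientInvariants S m d c') :
    ∃ e : ℕ, relRank (lieTop R).toSubmodule (lieTop S).toSubmodule = e ∧
      raiBound (m + d) m c' + e ≤ raiBound (m + 1 + d) (m + 1) c + 1 := by
  obtain ⟨e, he, hle⟩ := h.exists_relRank_lieTop_eq_le hS
  refine ⟨e, he, ?_⟩
  rw [raiBound_succ_derived]
  rcases h.class_eq_or_eq_succ hR.isLeast_class hS.isLeast_class with rfl | rfl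
  · omega
  · have hkR : ¬ γ c' ≤ R := fun hk ↦ absurd (hR.isLeast_class.2 hk) (by omega)
    have hsucc := h.relRank_lieTop_le_succ hS.isLeast_class.1 hkR
    rw [he, Nat.cast_le] at hsucc
    have hc' : 2 ≤ c' + 1 := hR.two_le_class
    rw [raiBound_succ_class m d (by omega)]
    omega

theorem IsCentralLine.exists_quotientInvariants (h : IsCentralLine R S) (hS : S ≤ R ⊔ γ 1)
    (hR : QuotientInvariants R m d c) (hc' : IsLeast {k | γ k ≤ S} c') :
    ∃ m', m = m' + 1 ∧ QuotientInvariants S m' d c' := by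
  have hsup : R ⊔ γ 1 = S ⊔ γ 1 :=
    le_antisymm (sup_le_sup_right h.le _) (sup_le hS le_sup_right)
  have hadd : relRank S.toSubmodule (γ 1).toSubmodule + 1 = m := by
    rw [add_comm, ← h.relRank_eq_one, ← hR.relRank_derived, ← relRank_sup_right S.toSubmodule,
      ← relRank_sup_right R.toSubmodule (γ 1).toSubmodule, ← LieSubmodule.sup_toSubmodule,
      ← LieSubmodule.sup_toSubmodule, hsup]
    exact relRank_add_relRank h.le le_sup_left
  obtain ⟨m', hm', rfl⟩ := exists_natCast_eq_of_add_one_eq hadd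
  exact ⟨m', rfl, hm', hsup ▸ hR.relRank_abelianization, hc'⟩

theorem IsCentralLine.exists_quotientInvariants_of_abelian (h : IsCentralLine R S) (hab : γ 1 ≤ R)
    (hR : QuotientInvariants R m d c) (hc' : IsLeast {k | γ k ≤ S} c') :
    m = 0 ∧ ∃ d', d = d' + 1 ∧ QuotientInvariants S 0 d' c' := by
  have hm : (m : Cardinal.{v}) = 0 := hR.relRank_derived ▸ relRank_eq_zero_iff.2 hab
  have hadd : relRank (S ⊔ γ 1).toSubmodule ⊤ + 1 = d := by
    rw [add_comm, ← h.relRank_eq_one, ← hR.relRank_abelianization, sup_eq_left.2 hab,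
      sup_eq_left.2 (hab.trans h.le)]
    exact relRank_add_relRank h.le le_top
  obtain ⟨d', hd', rfl⟩ := exists_natCast_eq_of_add_one_eq hadd
  refine ⟨by exact_mod_cast hm, d', rfl, ?_, hd', hc'⟩
  rw [Nat.cast_zero, relRank_eq_zero_iff]
  exact hab.trans h.le

theorem exists_isCentralLine_le_sup {k : ℕ} (hk : γ (k + 1) ≤ R) (hkR : ¬ γ k ≤ R) :
    ∃ S, IsCentralLine R S ∧ S ≤ R ⊔ γ k := by
  obtain ⟨s, hsk, hsR⟩ := SetLike.not_le_iff_exists.1 hkR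
  have hlie {w : F} (hw : w ∈ R.toSubmodule ⊔ Submodule.span K {s}) (x : F) : ⁅x, w⁆ ∈ R := by
    suffices R.toSubmodule ⊔ Submodule.span K {s} ≤
        R.toSubmodule.comap (LieAlgebra.ad K F x : F →ₗ[K] F) from this hw
    refine sup_le (fun r hr ↦ lie_mem_right K F R x r hr) ?_
    rw [Submodule.span_singleton_le_iff_mem]
    exact hk (lie_mem_lowerCentralSeries_succ x hsk)
  let S : LieIdeal K F :=
    { R.toSubmodule ⊔ Submodule.span K {s} with
      lie_mem := fun hw ↦ Submodule.mem_sup_left (hlie hw _) }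
  have hS : S.toSubmodule = R.toSubmodule ⊔ Submodule.span K {s} := rfl
  refine ⟨S, ⟨?_, ?_, relRank_sup_span_singleton hsR⟩, ?_⟩
  · exact (le_sup_left : R.toSubmodule ≤ R.toSubmodule ⊔ Submodule.span K {s})
  · refine lieTop_toSubmodule_le_iff.2 fun w hw x ↦ ?_
    rw [← lie_skew]
    exact neg_mem (hlie hw x)
  · rw [← LieSubmodule.toSubmodule_le_toSubmodule, hS, LieSubmodule.sup_toSubmodule]
    exact sup_le_sup_left ((Submodule.span_singleton_le_iff_mem _ _).2 hsk) _

/-- `(R ∩ F²) / [R, F]` is finite-dimensional, of dimension at most `b`. -/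
def MultiplierBoundedBy (R : LieIdeal K F) (b : ℤ) : Prop :=
  ∃ k : ℕ, multiplierRank R = k ∧ (k : ℤ) ≤ b

theorem IsCentralLine.multiplierBoundedBy_of_abelian (h : IsCentralLine R S) (hab : γ 1 ≤ R)
    (hR : QuotientInvariants R 0 (d + 1) c) (hS : QuotientInvariants S 0 d c')
    (hbound : MultiplierBoundedBy S (raiBound d 0 c')) :
    MultiplierBoundedBy R (raiBound (d + 1) 0 c) := by
  obtain ⟨e, he, hed⟩ := h.exists_relRank_lieTop_eq_le hS
  obtain ⟨k, hk, hkd⟩ := hbound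
  have hadd := multiplierRank_add_relRank_inf h.le h.lieTop_le
  rw [inf_eq_right.2 hab, inf_eq_right.2 (hab.trans h.le), relRank_eq_zero_iff.2 le_rfl, add_zero,
    hk, he] at hadd
  have hc : c ≤ 1 := hR.isLeast_class.2 hab
  have hc' : c' ≤ 1 := hS.isLeast_class.2 (hab.trans h.le)
  refine ⟨k + e, by exact_mod_cast hadd, ?_⟩
  rw [raiBound_abelian_succ d hc hc']
  push_cast
  omega

theorem IsCentralLine.multiplierBoundedBy (h : IsCentralLine R S) (hSle : S ≤ R ⊔ γ 1)
    (hR : QuotientInvariants R (m + 1) d c) (hS : QuotientInvariants S m d c')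
    (hbound : MultiplierBoundedBy S (raiBound (m + d) m c')) :
    MultiplierBoundedBy R (raiBound (m + 1 + d) (m + 1) c) := by
  obtain ⟨e, he, hed⟩ := h.exists_relRank_lieTop_eq_add_raiBound_le hR hS
  obtain ⟨k, hk, hkd⟩ := hbound
  have hadd := h.multiplierRank_add_one hSle
  rw [hk, he, ← Nat.cast_add] at hadd
  obtain ⟨j, hj, hke⟩ := exists_natCast_eq_of_add_one_eq hadd
  exact ⟨j, hj, by omega⟩

theorem multiplierRank_top : multiplierRank (⊤ : LieIdeal K F) = 0 := by
  rw [multiplierRank, relRank_eq_zero_iff, top_inf_eq, LieSubmodule.toSubmodule_le_toSubmodule]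
  exact le_rfl

theorem QuotientInvariants.multiplierBoundedBy_of_class_zero (hR : QuotientInvariants R m d 0) :
    MultiplierBoundedBy R (raiBound (m + d) m 0) := by
  obtain rfl : R = ⊤ := top_le_iff.1 hR.isLeast_class.1
  have hm : (m : Cardinal.{v}) = 0 :=
    hR.relRank_derived ▸ relRank_eq_zero_iff.2 le_top
  have hd : (d : Cardinal.{v}) = 0 :=
    hR.relRank_abelianization ▸ relRank_eq_zero_iff.2 (by rw [top_sup_eq]; exact le_rfl)
  obtain rfl : m = 0 := by exact_mod_cast hm
  obtain rfl : d = 0 := by exact_mod_cast hd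
  exact ⟨0, multiplierRank_top, by decide⟩

theorem QuotientInvariants.multiplierBoundedBy (hR : QuotientInvariants R m d c) :
    MultiplierBoundedBy R (raiBound (m + d) m c) := by
  induction hN : m + d using Nat.strong_induction_on generalizing R m d c with
  | h N ih =>
    subst hN
    obtain _ | k := c
    · exact hR.multiplierBoundedBy_of_class_zero
    have hkR : ¬ γ k ≤ R := fun hk ↦ k.not_succ_le_self (hR.isLeast_class.2 hk)
    obtain ⟨S, hRS, hSle⟩ := exists_isCentralLine_le_sup hR.isLeast_class.1 hkR
    have hnonempty : {j | γ j ≤ S}.Nonempty := ⟨k + 1, hR.isLeast_class.1.trans hRS.le⟩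
    have hc' := isLeast_csInf hnonempty
    obtain _ | k := k
    · have hab : γ 1 ≤ R := hR.isLeast_class.1
      obtain ⟨rfl, d, rfl, hS⟩ := hRS.exists_quotientInvariants_of_abelian hab hR hc'
      have hbound := ih (0 + d) (by omega) hS rfl
      rw [zero_add] at hbound ⊢
      exact hRS.multiplierBoundedBy_of_abelian hab hR hS hbound
    · have hSle : S ≤ R ⊔ γ 1 :=
        hSle.trans (sup_le_sup_left (antitone_lowerCentralSeries K F F (by omega)) R)
      obtain ⟨m, rfl, hS⟩ := hRS.exists_quotientInvariants hSle hR hc'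
      exact hRS.multiplierBoundedBy hSle hR hS (ih (m + d) (by omega) hS rfl)

theorem IsCentralLine.exists_multiplierRank_eq_raiBound (h : IsCentralLine R S)
    (hSle : S ≤ R ⊔ γ 1) (hR : QuotientInvariants R (m + 1) d c)
    (hS : QuotientInvariants S m d c') {k : ℕ} (hk : multiplierRank R = k)
    (hattained : (k : ℤ) = raiBound (m + 1 + d) (m + 1) c) :
    ∃ j : ℕ, multiplierRank S = j ∧ (j : ℤ) = raiBound (m + d) m c' := by
  obtain ⟨e, he, hincrement⟩ := h.exists_relRank_lieTop_eq_add_raiBound_le hR hS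
  obtain ⟨j, hj, hbound⟩ := hS.multiplierBoundedBy
  have hadd := h.multiplierRank_add_one hSle
  rw [hk, hj, he] at hadd
  have hadd' : k + 1 = j + e := by exact_mod_cast hadd
  exact ⟨j, hj, by omega⟩

end PresentationIdeals

section Presentations

variable {K : Type u} [Field K] {F G L : Type v} [LieRing F] [LieAlgebra K F] [LieRing G]
  [LieAlgebra K G] [LieRing L] [LieAlgebra K L] {π : F →ₗ⁅K⁆ L} {ρ : G →ₗ⁅K⁆ L}

theorem multiplierRank_ker_le_of_comp_eq {φ : F →ₗ⁅K⁆ G} {ψ : G →ₗ⁅K⁆ F} (hφ : ρ.comp φ = π)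
    (hψ : π.comp ψ = ρ) : multiplierRank ρ.ker ≤ multiplierRank π.ker := by
  have hφ' (x : F) : ρ (φ x) = π x := LieHom.congr_fun hφ x
  have hψ' (y : G) : π (ψ y) = ρ y := LieHom.congr_fun hψ y
  refine relRank_le_relRank_of_map (φ : F →ₗ[K] G) ?_ ?_
  · refine lieTop_toSubmodule_le_iff.2 fun r hr x ↦ ?_
    rw [Submodule.mem_comap, LieHom.coe_toLinearMap, LieHom.map_lie]
    exact lie_mem_lieTop ((hφ' r).trans hr) (φ x)
  · rintro y ⟨hyker, hy⟩
    have hθ : φ (ψ y) - y ∈ lieTop ρ.ker :=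
      map_sub_self_mem_lieTop (φ.comp ψ) (fun z ↦ by simp [hφ', hψ']) hy
    have hψy : ψ y ∈ lowerCentralSeries K F F 1 :=
      LieIdeal.map_lowerCentralSeries_le 1 (LieIdeal.mem_map hy)
    rw [← sub_sub_cancel (φ (ψ y)) y, sub_eq_neg_add]
    exact Submodule.add_mem_sup (neg_mem hθ) ⟨ψ y, ⟨(hψ' y).trans hyker, hψy⟩, rfl⟩

theorem relRank_ker_comap (hπ : Function.Surjective π) (I : LieIdeal K L) :
    relRank π.ker.toSubmodule (I.comap π).toSubmodule = Module.rank K I := by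
  rw [LieHom.ker_toSubmodule, relRank_ker, LieIdeal.comap_toSubmodule,
    Submodule.map_comap_eq_of_surjective hπ]
  rfl

theorem isCentralLine_ker_comap (hπ : Function.Surjective π) {I : LieIdeal K L}
    (hI : Module.rank K I = 1) (hcenter : I ≤ LieAlgebra.center K L) :
    IsCentralLine π.ker (I.comap π) where
  le := π.ker_le_comap I
  lieTop_le := by
    refine lieTop_toSubmodule_le_iff.2 fun s hs x ↦ ?_
    have hs : π s ∈ LieAlgebra.center K L := hcenter hs
    rw [LieSubmodule.mem_toSubmodule, LieHom.mem_ker, LieHom.map_lie, ← lie_skew, neg_eq_zero]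
    exact (LieModule.mem_maxTrivSubmodule _ _ _ _).1 hs (π x)
  relRank_eq_one := (relRank_ker_comap hπ I).trans hI

end Presentations

section FreePresentations

variable {K : Type} [Field K] {X Y F L : Type} [LieRing F] [LieAlgebra K F] [LieRing L]
  [LieAlgebra K L]

theorem multiplierRank_ker_eq_of_surjective {π : FreeLieAlgebra K X →ₗ⁅K⁆ L}
    {ρ : FreeLieAlgebra K Y →ₗ⁅K⁆ L} (hπ : Function.Surjective π) (hρ : Function.Surjective ρ) :
    multiplierRank π.ker = multiplierRank ρ.ker := by
  obtain ⟨φ, hφ⟩ := exists_comp_eq_of_surjective π hρ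
  obtain ⟨ψ, hψ⟩ := exists_comp_eq_of_surjective ρ hπ
  exact le_antisymm (multiplierRank_ker_le_of_comp_eq hψ hφ)
    (multiplierRank_ker_le_of_comp_eq hφ hψ)

theorem lieSchurMultiplierDim_eq_toNat (π : FreeLieAlgebra K X →ₗ⁅K⁆ L) :
    lieSchurMultiplierDim K X π = toNat (multiplierRank π.ker) := by
  rw [multiplierRank, ← rank_quotient_comap_subtype]
  rfl

theorem isLeast_lowerCentralSeries_le_ker {π : F →ₗ⁅K⁆ L} (hπ : Function.Surjective π) {c : ℕ}
    (hc : lieNilpotencyClass K L c) : IsLeast {k | lowerCentralSeries K F F k ≤ π.ker} c := by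
  refine ⟨(lowerCentralSeries_le_ker_iff hπ c).2 hc.1, fun k hk ↦ ?_⟩
  by_contra! hkc
  exact hc.2 k hkc ((lowerCentralSeries_le_ker_iff hπ k).1 hk)

theorem quotientInvariants_ker [FiniteDimensional K L] {π : F →ₗ⁅K⁆ L}
    (hπ : Function.Surjective π) {m d c : ℕ} (hn : Module.finrank K L = m + d)
    (hm : lieDerivedDim K L = m) (hc : lieNilpotencyClass K L c) :
    QuotientInvariants π.ker m d c := by
  have hderived : relRank π.ker.toSubmodule (lowerCentralSeries K F F 1).toSubmodule = m := by
    rw [LieHom.ker_toSubmodule, relRank_ker, map_lowerCentralSeries_toSubmodule hπ, ← hm]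
    exact (Module.finrank_eq_rank K _).symm
  have htop : relRank π.ker.toSubmodule ⊤ = (m + d : ℕ) := by
    rw [LieHom.ker_toSubmodule, relRank_ker, Submodule.map_top, LinearMap.range_eq_top.2 hπ,
      rank_top, ← hn, Module.finrank_eq_rank]
  refine ⟨hderived, ?_, isLeast_lowerCentralSeries_le_ker hπ hc⟩
  rw [← relRank_add_relRank le_sup_left le_top, relRank_sup_right, hderived, Nat.cast_add] at htop
  rw [LieSubmodule.sup_toSubmodule]
  exact Cardinal.eq_of_add_eq_add_left htop natCast_lt_aleph0

end FreePresentations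

theorem quotient_attains_bound_general (K L : Type) [Field K] [LieRing L] [LieAlgebra K L]
    [FiniteDimensional K L] (n m c : ℕ)
    (hn : Module.finrank K L = n) (hm : lieDerivedDim K L = m)
    (hc : lieNilpotencyClass K L c)
    (hM : ∃ (X : Type) (π : FreeLieAlgebra K X →ₗ⁅K⁆ L), Function.Surjective π ∧
      (lieSchurMultiplierDim K X π : ℤ) = raiBound n m c)
    (I : LieIdeal K L) (hI1 : Module.finrank K ↥I = 1)
    (hIZ : I ≤ LieAlgebra.center K L)
    (hID : I ≤ LieModule.lowerCentralSeries K L L 1) :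
    ∀ c' : ℕ, lieNilpotencyClass K (L ⧸ I) c' →
      ∀ (Y : Type) (ρ : FreeLieAlgebra K Y →ₗ⁅K⁆ (L ⧸ I)), Function.Surjective ρ →
        (lieSchurMultiplierDim K Y ρ : ℤ) =
          ((n : ℤ) - m - 1) * ((n : ℤ) + m - 2) / 2
            - ∑ i ∈ Finset.Icc 2 (min (n - m) c'), ((n : ℤ) - m - (i : ℤ)) := by
  intro c' hc' Y ρ hρ
  obtain ⟨X, π, hπ, hattained⟩ := hM
  obtain ⟨d, rfl⟩ : ∃ d, n = m + d :=
    Nat.exists_eq_add_of_le (hm ▸ hn ▸ Submodule.finrank_le _)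
  have hqπ : Function.Surjective ((quotientLieHom I).comp π) :=
    (quotientLieHom_surjective I).comp hπ
  have hline := isCentralLine_ker_comap hπ (rank_eq_one_iff_finrank_eq_one.2 hI1) hIZ
  have hle := comap_le_ker_sup_lowerCentralSeries hπ hID
  have hR := quotientInvariants_ker hπ hn hm hc
  have hclass := isLeast_lowerCentralSeries_le_ker hqπ hc'
  rw [ker_quotientLieHom_comp] at hclass
  obtain ⟨m, rfl, hS⟩ := hline.exists_quotientInvariants hle hR hclass
  obtain ⟨k, hk, -⟩ := hR.multiplierBoundedBy
  rw [lieSchurMultiplierDim_eq_toNat, hk, toNat_natCast] at hattained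
  obtain ⟨j, hj, hjbound⟩ := hline.exists_multiplierRank_eq_raiBound hle hR hS hk hattained
  rw [lieSchurMultiplierDim_eq_toNat, multiplierRank_ker_eq_of_surjective hρ hqπ,
    ker_quotientLieHom_comp, hj, toNat_natCast, hjbound, add_right_comm m 1 d]
  exact raiBound_eq_of_succ_succ _ _ _

/-- if `L` is `n`-dimensional nilpotent of class `c ≥ 3` with
`dim L² = m`, `dim M(L)` attains Rai's bound, and `I` is a one-dimensional ideal
contained in `Z(L) ∩ L²`, then `dim M(L/I)` attains the corresponding bound for `L/I`:
`dim M(L/I) = (1/2)(n−m−1)(n+m−2) − Σ_{i=2}^{min(n−m,c')} (n−m−i)` with `c' = cl(L/I)`. -/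
theorem quotient_attains_bound (K L : Type) [Field K] [LieRing L] [LieAlgebra K L]
    [FiniteDimensional K L] (n m c : ℕ) (hc3 : 3 ≤ c)
    (hn : Module.finrank K L = n) (hm : lieDerivedDim K L = m)
    (hc : lieNilpotencyClass K L c)
    (hM : ∃ (X : Type) (π : FreeLieAlgebra K X →ₗ⁅K⁆ L), Function.Surjective π ∧
      (lieSchurMultiplierDim K X π : ℤ) = raiBound n m c)
    (I : LieIdeal K L) (hI1 : Module.finrank K ↥I = 1)
    (hIZ : I ≤ LieAlgebra.center K L)
    (hID : I ≤ LieModule.lowerCentralSeries K L L 1) :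
    ∀ c' : ℕ, lieNilpotencyClass K (L ⧸ I) c' →
      ∀ (Y : Type) (ρ : FreeLieAlgebra K Y →ₗ⁅K⁆ (L ⧸ I)), Function.Surjective ρ →
        (lieSchurMultiplierDim K Y ρ : ℤ) =
          ((n : ℤ) - m - 1) * ((n : ℤ) + m - 2) / 2
            - ∑ i ∈ Finset.Icc 2 (min (n - m) c'), ((n : ℤ) - m - (i : ℤ)) :=
  quotient_attains_bound_general K L n m c hn hm hc hM I hI1 hIZ hID
end

section
/- Let L be an n-dimensional nilpotent Lie algebra of nilpotency class c ≥ 3 with dim L² = m ≥ 2. If dim M(L) = (1/2)(n−m−1)(n+m) − Σ_{i=2}^{min(n−m,c)} (n−m−i), then L is capable. -/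
open Module

/-- A Lie algebra `L` is capable if `L ≅ E/Z(E)` for some Lie algebra `E`. -/
def lieIsCapable (K : Type) [Field K] (L : Type) [LieRing L] [LieAlgebra K L] : Prop :=
  ∃ (E : Type) (_ : LieRing E) (_ : LieAlgebra K E),
    Nonempty ((E ⧸ LieAlgebra.center K E) ≃ₗ⁅K⁆ L)

/-!
Let `E` be a central extension of a nilpotent Lie algebra `L`. Filtering `E²` by the lower central
series bounds `dim E²` in terms of `d = dim (L / L²)`, `m = dim L²` and the class `c` of `L`: modulo
`γ_{k+3}(E)`, the term `γ_{k+2}(E)` is spanned by brackets of representatives of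
`γ_{k+1}(L) / γ_{k+2}(L)` with `d` generators. One representative can be chosen to be a left-normed
commutator of `k + 1` generators, and by the Jacobi identity only its brackets with its own entries
are needed, which saves `d - (k + 1)` brackets at this step.

If `L = F / R` with `F` free, then `E = F / [R, F]` satisfies `dim E² = dim M(L) + dim L²`, so `E`
attains the bound for `L` exactly when `M(L)` attains Rai's bound. On the other hand `E` is also a
central extension of the quotient of `L` by the image of `Z(E)`, and unless `dim L = 1` the bound
for a proper central quotient of `L` is strictly smaller than the bound for `L`. Hence `Z(E)` has
trivial image in `L`, and `L ≅ E / Z(E)`.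
-/

section LowerCentral

variable {R E L : Type*} [CommRing R] [LieRing E] [LieAlgebra R E] [LieRing L] [LieAlgebra R L]

/-- The lower central series of a Lie algebra as a sequence of submodules, indexed from `0` as
`LieModule.lowerCentralSeries` is: `lowerCentral R L k` is the paper's `γ_{k+1}(L)`. -/
abbrev lowerCentral (R L : Type*) [CommRing R] [LieRing L] [LieAlgebra R L] (k : ℕ) :
    Submodule R L :=
  (LieModule.lowerCentralSeries R L L k).toSubmodule

theorem lie_lie_eq_lie_lie_sub_lie_lie (x y z : L) : ⁅x, ⁅y, z⁆⁆ = ⁅⁅x, y⁆, z⁆ - ⁅⁅x, z⁆, y⁆ := by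
  rw [leibniz_lie, ← lie_skew y ⁅x, z⁆, sub_eq_add_neg]

theorem lie_mem_swap {N : Submodule R L} {x y : L} : ⁅x, y⁆ ∈ N ↔ ⁅y, x⁆ ∈ N := by
  rw [← lie_skew, neg_mem_iff]

theorem lowerCentral_zero : lowerCentral R L 0 = ⊤ := rfl

theorem lowerCentral_antitone : Antitone (lowerCentral R L) := fun _ _ hij =>
  LieModule.antitone_lowerCentralSeries R L L hij

theorem lie_mem_lowerCentral_succ {k : ℕ} {x : L} (hx : x ∈ lowerCentral R L k) (y : L) :
    ⁅x, y⁆ ∈ lowerCentral R L (k + 1) := by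
  rw [lie_mem_swap, lowerCentral, LieModule.lowerCentralSeries_succ]
  exact LieSubmodule.lie_mem_lie (LieSubmodule.mem_top y) hx

theorem lowerCentral_succ_le {k : ℕ} {N : Submodule R L}
    (h : ∀ x ∈ lowerCentral R L k, ∀ y : L, ⁅x, y⁆ ∈ N) : lowerCentral R L (k + 1) ≤ N := by
  rw [lowerCentral, LieModule.lowerCentralSeries_succ,
    LieSubmodule.lieIdeal_oper_eq_linear_span', Submodule.span_le]
  rintro _ ⟨y, -, x, hx, rfl⟩
  exact lie_mem_swap.1 (h x hx y)

theorem lie_mem_lowerCentral_add_two {k : ℕ} {x y : L} (hx : x ∈ lowerCentral R L k)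
    (hy : y ∈ lowerCentral R L 1) : ⁅x, y⁆ ∈ lowerCentral R L (k + 2) := by
  suffices h : lowerCentral R L 1 ≤ (lowerCentral R L (k + 2)).comap (LieAlgebra.ad R L x) from
    h hy
  refine lowerCentral_succ_le fun a _ b => ?_
  rw [Submodule.mem_comap, LieAlgebra.ad_apply, lie_lie_eq_lie_lie_sub_lie_lie]
  exact sub_mem (lie_mem_lowerCentral_succ (lie_mem_lowerCentral_succ hx a) b)
    (lie_mem_lowerCentral_succ (lie_mem_lowerCentral_succ hx b) a)

theorem map_lowerCentral {p : E →ₗ⁅R⁆ L} (hp : Function.Surjective p) (k : ℕ) :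
    (lowerCentral R E k).map (p : E →ₗ[R] L) = lowerCentral R L k := by
  rw [lowerCentral, lowerCentral, ← LieIdeal.lowerCentralSeries_map_eq k hp,
    LieIdeal.coe_map_of_surjective hp]

theorem lowerCentral_eq_bot_iff [LieRing.IsNilpotent L] {k : ℕ} :
    lowerCentral R L k = ⊥ ↔ LieModule.nilpotencyLength L L ≤ k := by
  have eq_bot_iff_int (i : ℕ) :
      lowerCentral R L i = ⊥ ↔ LieModule.lowerCentralSeries ℤ L L i = ⊥ := by
    rw [LieSubmodule.toSubmodule_eq_bot]
    simp [SetLike.ext'_iff, LieModule.coe_lowerCentralSeries_eq_int R L L]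
  rw [eq_bot_iff_int]
  refine ⟨fun h => Nat.sInf_le h, fun h => eq_bot_iff.2 ?_⟩
  have length_mem : LieModule.lowerCentralSeries ℤ L L (LieModule.nilpotencyLength L L) = ⊥ :=
    Nat.sInf_mem (LieModule.IsNilpotent.nilpotent ℤ L L)
  exact length_mem ▸ LieModule.antitone_lowerCentralSeries ℤ L L h

theorem lowerCentral_succ_lt [LieRing.IsNilpotent L] {k : ℕ}
    (hk : k < LieModule.nilpotencyLength L L) :
    lowerCentral R L (k + 1) < lowerCentral R L k := by
  refine (lowerCentral_antitone k.le_succ).lt_of_ne fun heq => ?_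
  have stable : ∀ j, k ≤ j →
      LieModule.lowerCentralSeries R L L j = LieModule.lowerCentralSeries R L L k := by
    refine Nat.le_induction rfl fun j _ ih => ?_
    rw [LieModule.lowerCentralSeries_succ, ih, ← LieModule.lowerCentralSeries_succ]
    exact LieSubmodule.toSubmodule_injective heq
  have hbot : lowerCentral R L k = ⊥ := by
    rw [lowerCentral, ← stable _ hk.le, lowerCentral_eq_bot_iff]
  exact hk.not_ge (lowerCentral_eq_bot_iff.1 hbot)

end LowerCentral

section CentralExtension

variable {R E L Q : Type*} [CommRing R] [LieRing E] [LieAlgebra R E] [LieRing L] [LieAlgebra R L]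
  [LieRing Q] [LieAlgebra R Q]

/-- A homomorphism of Lie algebras exhibiting its domain as a central extension of its codomain. -/
structure IsCentralExtension (p : E →ₗ⁅R⁆ L) : Prop where
  surjective : Function.Surjective p
  ker_le_center : p.ker ≤ LieAlgebra.center R E

namespace IsCentralExtension

variable {p : E →ₗ⁅R⁆ L} {N : Submodule R E} {k : ℕ}

theorem id : IsCentralExtension (LieHom.id : L →ₗ⁅R⁆ L) where
  surjective := Function.surjective_id
  ker_le_center x hx := by
    rw [show x = 0 from hx]
    exact zero_mem _

theorem of_comp {r : L →ₗ⁅R⁆ Q} (hp : Function.Surjective p)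
    (h : IsCentralExtension (r.comp p)) : IsCentralExtension r where
  surjective := .of_comp (g := p) h.surjective
  ker_le_center x hx y := by
    obtain ⟨e, rfl⟩ := hp x
    obtain ⟨f, rfl⟩ := hp y
    rw [← LieHom.map_lie, show ⁅f, e⁆ = 0 from h.ker_le_center hx f, map_zero]

theorem lie_eq_zero (hp : IsCentralExtension p) {x : E} (hx : p x = 0) (y : E) : ⁅x, y⁆ = 0 := by
  rw [← lie_skew, show ⁅y, x⁆ = 0 from hp.ker_le_center hx y, neg_zero]

theorem lowerCentral_succ_eq_bot (hp : IsCentralExtension p) (hk : lowerCentral R L k = ⊥) :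
    lowerCentral R E (k + 1) = ⊥ := by
  refine le_bot_iff.1 (lowerCentral_succ_le fun x hx y => ?_)
  have hpx : p x ∈ lowerCentral R L k :=
    map_lowerCentral hp.surjective k ▸ Submodule.mem_map_of_mem hx
  exact hp.lie_eq_zero ((Submodule.mem_bot R).1 (hk ▸ hpx)) y

-- Brackets in `E` only depend on images in `L`, so generators of `γ(L)` suffice to control `γ(E)`.
theorem lie_mem_of_le_span (hp : IsCentralExtension p) {A : Set E}
    (hA : lowerCentral R L k ≤ Submodule.span R (p '' A) ⊔ lowerCentral R L (k + 1)) {z : E}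
    (hz : ∀ u ∈ lowerCentral R E (k + 1), ⁅u, z⁆ ∈ N) (hAz : ∀ a ∈ A, ⁅a, z⁆ ∈ N) :
    ∀ x ∈ lowerCentral R E k, ⁅x, z⁆ ∈ N := by
  have hle : lowerCentral R E k ≤ Submodule.span R A ⊔ lowerCentral R E (k + 1) ⊔
      LinearMap.ker (p : E →ₗ[R] L) := by
    rw [← LinearMap.map_le_map_iff, Submodule.map_sup, Submodule.map_span,
      map_lowerCentral hp.surjective, map_lowerCentral hp.surjective]
    exact hA
  suffices h : Submodule.span R A ⊔ lowerCentral R E (k + 1) ⊔ LinearMap.ker (p : E →ₗ[R] L) ≤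
      N.comap (LieAlgebra.ad R E z) from fun x hx => lie_mem_swap.1 (h (hle hx))
  refine sup_le (sup_le (Submodule.span_le.2 fun a ha => ?_) fun u hu => ?_) fun e he => ?_
  · exact lie_mem_swap.1 (hAz a ha)
  · exact lie_mem_swap.1 (hz u hu)
  · refine lie_mem_swap.1 ?_
    rw [hp.lie_eq_zero he]
    exact zero_mem N

theorem lowerCentral_succ_le_of_le_span (hp : IsCentralExtension p) {A B : Set E}
    (hB : lowerCentral R L 0 ≤ Submodule.span R (p '' B) ⊔ lowerCentral R L 1)
    (hA : lowerCentral R L k ≤ Submodule.span R (p '' A) ⊔ lowerCentral R L (k + 1))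
    (hN : lowerCentral R E (k + 2) ≤ N) (hAB : ∀ a ∈ A, ∀ b ∈ B, ⁅a, b⁆ ∈ N) :
    lowerCentral R E (k + 1) ≤ N := by
  refine lowerCentral_succ_le fun x hx y => lie_mem_swap.1 ?_
  refine hp.lie_mem_of_le_span hB (fun u hu => ?_) (fun b hb => ?_) y Submodule.mem_top
  · exact hN (lie_mem_swap.1 (lie_mem_lowerCentral_add_two hx hu))
  · exact lie_mem_swap.1 <| hp.lie_mem_of_le_span hA
      (fun u hu => hN (lie_mem_lowerCentral_succ hu b)) (fun a ha => hAB a ha b hb) x hx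

end IsCentralExtension

end CentralExtension

section LeftNormed

variable {R E L : Type*} [CommRing R] [LieRing E] [LieAlgebra R E] [LieRing L] [LieAlgebra R L]

/-- `IsLeftNormed B k w` says that `w` is a left-normed commutator `[b₀, b₁, …, b_k]` of `k + 1`
elements of `B`. -/
inductive IsLeftNormed (B : Set E) : ℕ → E → Prop
  | of_mem {b : E} (hb : b ∈ B) : IsLeftNormed B 0 b
  | lie {k : ℕ} {w b : E} (hw : IsLeftNormed B k w) (hb : b ∈ B) : IsLeftNormed B (k + 1) ⁅w, b⁆

namespace IsLeftNormed

variable {B : Set E} {k : ℕ} {w : E}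

theorem mono {B' : Set E} (hB : B ⊆ B') (hw : IsLeftNormed B k w) : IsLeftNormed B' k w := by
  induction hw with
  | of_mem hb => exact .of_mem (hB hb)
  | lie _ hb ih => exact .lie ih (hB hb)

theorem exists_finset (hw : IsLeftNormed B k w) :
    ∃ S : Finset E, (S : Set E) ⊆ B ∧ S.card ≤ k + 1 ∧ IsLeftNormed (S : Set E) k w := by
  classical
  induction hw with
  | @of_mem b hb => exact ⟨{b}, by simpa using hb, by simp, .of_mem (by simp)⟩
  | @lie k w b _ hb ih =>
    obtain ⟨S, hSB, hScard, hS⟩ := ih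
    refine ⟨insert b S, ?_, (S.card_insert_le b).trans (Nat.succ_le_succ hScard), ?_⟩
    · simpa [Set.insert_subset_iff] using ⟨hb, hSB⟩
    · exact .lie (hS.mono (by simp)) (by simp)

theorem exists_lift (p : E →ₗ⁅R⁆ L) {w : L} (hw : IsLeftNormed (p '' B) k w) :
    ∃ v : E, IsLeftNormed B k v ∧ p v = w := by
  induction hw with
  | of_mem hb =>
    obtain ⟨b, hb, rfl⟩ := hb
    exact ⟨b, .of_mem hb, rfl⟩
  | lie _ hb ih =>
    obtain ⟨b, hb, rfl⟩ := hb
    obtain ⟨v, hv, rfl⟩ := ih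
    exact ⟨⁅v, b⁆, .lie hv hb, p.map_lie v b⟩

theorem mem_lowerCentral (hw : IsLeftNormed B k w) : w ∈ lowerCentral R E k := by
  induction hw with
  | of_mem _ => exact Submodule.mem_top
  | lie _ _ ih => exact lie_mem_lowerCentral_succ ih _

-- The Jacobi identity moves the entries of `w` one at a time to the outermost position.
theorem lie_mem {N : Submodule R E} (hw : IsLeftNormed B k w) {l : ℕ} {v : E}
    (hv : v ∈ lowerCentral R E l) (hN : ∀ g ∈ lowerCentral R E (l + k), ∀ b ∈ B, ⁅g, b⁆ ∈ N) :
    ⁅v, w⁆ ∈ N := by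
  induction hw generalizing l v N with
  | of_mem hb => exact hN v hv _ hb
  | @lie k w b _ hb ih =>
    rw [lie_lie_eq_lie_lie_sub_lie_lie]
    refine sub_mem (hN _ ?_ b hb) (ih (lie_mem_lowerCentral_succ hv b) fun g hg => hN g ?_)
    · exact ih hv fun g hg c _ => lie_mem_lowerCentral_succ hg c
    · rwa [show l + (k + 1) = l + 1 + k by lia]

end IsLeftNormed

theorem lowerCentral_le_span_isLeftNormed {B : Set L}
    (hB : lowerCentral R L 0 ≤ Submodule.span R B ⊔ lowerCentral R L 1) (k : ℕ) :
    lowerCentral R L k ≤ Submodule.span R {w | IsLeftNormed B k w} ⊔ lowerCentral R L (k + 1) := by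
  induction k with
  | zero => exact hB.trans (sup_le_sup_right (Submodule.span_mono fun b hb => .of_mem hb) _)
  | succ k ih =>
    refine IsCentralExtension.id.lowerCentral_succ_le_of_le_span (B := B)
      (A := {w | IsLeftNormed B k w}) (by simpa using hB) (by simpa using ih) le_sup_right ?_
    exact fun w hw b hb => Submodule.mem_sup_left (Submodule.subset_span (.lie hw hb))

theorem exists_isLeftNormed_notMem {B : Set L}
    (hB : lowerCentral R L 0 ≤ Submodule.span R B ⊔ lowerCentral R L 1) {k : ℕ}
    (hk : lowerCentral R L (k + 1) < lowerCentral R L k) :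
    ∃ w, IsLeftNormed B k w ∧ w ∉ lowerCentral R L (k + 1) := by
  by_contra! hall
  exact hk.not_ge <| (lowerCentral_le_span_isLeftNormed hB k).trans
    (sup_le (Submodule.span_le.2 hall) le_rfl)

-- Pushing `w` outwards, `⁅w, y⁆` is controlled by brackets with the entries `S` of `w` alone.
theorem IsCentralExtension.lowerCentral_succ_le_of_isLeftNormed {p : E →ₗ⁅R⁆ L}
    (hp : IsCentralExtension p) {A B S : Set E} {N : Submodule R E} {k : ℕ} {w : E}
    (hB : lowerCentral R L 0 ≤ Submodule.span R (p '' B) ⊔ lowerCentral R L 1)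
    (hA : lowerCentral R L k ≤ Submodule.span R (p '' insert w A) ⊔ lowerCentral R L (k + 1))
    (hN : lowerCentral R E (k + 2) ≤ N) (hSB : S ⊆ B) (hw : IsLeftNormed S k w)
    (hAB : ∀ a ∈ A, ∀ b ∈ B, ⁅a, b⁆ ∈ N) (hwS : ∀ s ∈ S, ⁅w, s⁆ ∈ N) :
    lowerCentral R E (k + 1) ≤ N := by
  have lie_entry_mem : ∀ g ∈ lowerCentral R E (0 + k), ∀ s ∈ S, ⁅g, s⁆ ∈ N := by
    rw [Nat.zero_add]
    intro g hg s hs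
    refine hp.lie_mem_of_le_span hA (fun u hu => hN (lie_mem_lowerCentral_succ hu s)) ?_ g hg
    exact Set.forall_mem_insert.2 ⟨hwS s hs, fun a ha => hAB a ha s (hSB hs)⟩
  have lie_w_mem (y : E) : ⁅w, y⁆ ∈ N :=
    lie_mem_swap.1 (hw.lie_mem (l := 0) Submodule.mem_top lie_entry_mem)
  exact hp.lowerCentral_succ_le_of_le_span hB hA hN <|
    Set.forall_mem_insert.2 ⟨fun b _ => lie_w_mem b, hAB⟩

end LeftNormed

section SpannedMod

variable {K V : Type*} [Field K] [AddCommGroup V] [Module K V] {M N P : Submodule K V} {a b : ℕ}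

/-- `M` is spanned by at most `n` vectors modulo `N`. For `N ≤ M` this says `dim (M / N) ≤ n`, in a
form that needs no finiteness of `M` and is additive along a filtration. -/
def IsSpannedMod (n : ℕ) (M N : Submodule K V) : Prop :=
  ∃ T : Finset V, T.card ≤ n ∧ M ≤ Submodule.span K T ⊔ N

theorem IsSpannedMod.trans (hMN : IsSpannedMod a M N) (hNP : IsSpannedMod b N P) :
    IsSpannedMod (a + b) M P := by
  classical
  obtain ⟨S, hScard, hS⟩ := hMN
  obtain ⟨T, hTcard, hT⟩ := hNP
  refine ⟨S ∪ T, (S.card_union_le T).trans (add_le_add hScard hTcard), ?_⟩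
  rw [Finset.coe_union, Submodule.span_union, sup_assoc]
  exact hS.trans (sup_le_sup_left hT _)

theorem IsSpannedMod.mono (hab : a ≤ b) (h : IsSpannedMod a M N) : IsSpannedMod b M N := by
  obtain ⟨T, hTcard, hT⟩ := h
  exact ⟨T, hTcard.trans hab, hT⟩

theorem IsSpannedMod.exists_lift {W : Type*} {f : W → V} (hf : Function.Surjective f)
    (h : IsSpannedMod a M N) :
    ∃ T : Finset W, T.card ≤ a ∧ M ≤ Submodule.span K (f '' T) ⊔ N := by
  classical
  obtain ⟨T, hTcard, hT⟩ := h
  refine ⟨T.image (Function.surjInv hf), Finset.card_image_le.trans hTcard, ?_⟩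
  rwa [Finset.coe_image, ← Set.image_comp, (Function.rightInverse_surjInv hf).comp_eq_id,
    Set.image_id]

theorem IsSpannedMod.finiteDimensional (h : IsSpannedMod a M ⊥) : FiniteDimensional K M := by
  obtain ⟨T, -, hT⟩ := h
  exact Submodule.finiteDimensional_of_le (sup_bot_eq (Submodule.span K (T : Set V)) ▸ hT)

theorem IsSpannedMod.finrank_le (h : IsSpannedMod a M ⊥) : finrank K M ≤ a := by
  obtain ⟨T, hTcard, hT⟩ := h
  rw [sup_bot_eq] at hT
  exact (Submodule.finrank_mono hT).trans ((finrank_span_finset_le_card T).trans hTcard)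

theorem isSpannedMod_finrank_sub [FiniteDimensional K M] (h : N ≤ M) :
    IsSpannedMod (finrank K M - finrank K N) M N := by
  classical
  obtain ⟨C, hC⟩ := Submodule.exists_isCompl (N.comap M.subtype)
  let basis := finBasis K C
  refine ⟨Finset.univ.image fun i => ((basis i : M) : V), ?_, ?_⟩
  · have hdim := Submodule.finrank_add_eq_of_isCompl hC
    rw [(Submodule.comapSubtypeEquivOfLe h).finrank_eq] at hdim
    refine Finset.card_image_le.trans ?_
    rw [Finset.card_univ, Fintype.card_fin]
    lia
  · have hspan : Submodule.span K (Set.range fun i => ((basis i : M) : V)) =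
        C.map M.subtype := by
      have hrange : (Set.range fun i => ((basis i : M) : V)) =
          M.subtype '' (C.subtype '' Set.range basis) := by
        rw [← Set.range_comp, ← Set.range_comp]
        rfl
      rw [hrange, Submodule.span_image, Submodule.span_image, basis.span_eq,
        Submodule.map_subtype_top]
    rw [Finset.coe_image, Finset.coe_univ, Set.image_univ, hspan,
      ← inf_eq_right.2 h, ← Submodule.map_comap_subtype, ← Submodule.map_sup, sup_comm,
      hC.sup_eq_top, Submodule.map_subtype_top]

theorem finrank_span_singleton_sup [FiniteDimensional K N] {w : V} (hw : w ∉ N) :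
    finrank K ↥(Submodule.span K {w} ⊔ N) = finrank K N + 1 := by
  have hw0 : w ≠ 0 := fun h => hw (h ▸ zero_mem N)
  have hdisj : Submodule.span K {w} ⊓ N = ⊥ := by
    rwa [← disjoint_iff, disjoint_comm, Submodule.disjoint_span_singleton' hw0]
  have hdim := Submodule.finrank_sup_add_finrank_inf_eq (Submodule.span K {w}) N
  rwa [hdisj, finrank_bot, finrank_span_singleton hw0, add_zero, add_comm] at hdim

theorem finrank_map_add_finrank_inf_ker {W : Type*} [AddCommGroup W] [Module K W]
    (f : V →ₗ[K] W) (M : Submodule K V) [FiniteDimensional K M] :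
    finrank K (M.map f) + finrank K ↥(M ⊓ LinearMap.ker f) = finrank K M := by
  rw [← LinearMap.finrank_range_add_finrank_ker (f.domRestrict M), LinearMap.range_domRestrict,
    LinearMap.ker_domRestrict, ← Submodule.finrank_map_subtype_eq, Submodule.map_comap_subtype]

theorem finrank_quotient_comap_subtype (M J : Submodule K V) :
    finrank K (M ⧸ J.comap M.subtype) = finrank K (M.map J.mkQ) := by
  have hker : LinearMap.ker (J.mkQ.domRestrict M) = J.comap M.subtype := by
    rw [LinearMap.ker_domRestrict, Submodule.ker_mkQ]
  rw [← hker, (LinearMap.quotKerEquivRange _).finrank_eq, LinearMap.range_domRestrict]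

end SpannedMod

section CentralExtensionBound

variable {K E L : Type*} [Field K] [LieRing E] [LieAlgebra K E] [LieRing L] [LieAlgebra K L]

/-- Rai's bound for the dimension of `E²`, where `E` is a central extension of a nilpotent Lie
algebra `L` of class `c ≥ 1` with `dim (L / L²) = d` and `dim L² = m`. The untruncated formula is
`d m + d (d - 1) / 2 - ∑_{i=2}^{min d c} (d - i)`, and subtracting `m` gives `raiBound`. -/
def centralExtensionBound (d m c : ℕ) : ℕ :=
  d * m + (d - 1) + (d - c).choose 2

theorem choose_two_sub (d c : ℕ) :
    (d - c).choose 2 = (d - (c + 1)).choose 2 + (d - (c + 1)) := by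
  obtain hdc | ⟨t, rfl⟩ := (lt_or_ge c d).symm.imp_right Nat.exists_eq_add_of_lt
  · simp [Nat.sub_eq_zero_of_le hdc, Nat.sub_eq_zero_of_le (hdc.trans c.le_succ)]
  · rw [show c + t + 1 - c = t + 1 by lia, show c + t + 1 - (c + 1) = t by lia,
      Nat.choose_succ_succ' t 1, Nat.choose_one_right, add_comm]

theorem centralExtensionBound_succ (d m r c : ℕ) :
    centralExtensionBound d (m + r + 1) (c + 1) =
      centralExtensionBound d m c + (r * d + min d (c + 1)) := by
  have hd : d = d - (c + 1) + min d (c + 1) := by lia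
  rw [centralExtensionBound, centralExtensionBound, choose_two_sub d c]
  linear_combination hd

theorem centralExtensionBound_zero_one (d : ℕ) : centralExtensionBound d 0 1 = d.choose 2 := by
  have h := choose_two_sub d 0
  rw [Nat.sub_zero, Nat.zero_add] at h
  rw [centralExtensionBound, h]
  lia

theorem centralExtensionBound_mono {d d' m m' c c' : ℕ} (hd : d ≤ d') (hm : m ≤ m') (hc : c' ≤ c) :
    centralExtensionBound d m c ≤ centralExtensionBound d' m' c' := by
  have hchoose : (d - c).choose 2 ≤ (d' - c').choose 2 := Nat.choose_le_choose 2 (by lia)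
  unfold centralExtensionBound
  gcongr

theorem centralExtensionBound_lt_succ_left {d m : ℕ} (c : ℕ) (h : d + m ≠ 0) :
    centralExtensionBound d m c < centralExtensionBound (d + 1) m c := by
  have hchoose : (d - c).choose 2 ≤ (d + 1 - c).choose 2 := Nat.choose_le_choose 2 (by lia)
  unfold centralExtensionBound
  lia

theorem centralExtensionBound_lt_succ_succ {d : ℕ} (hd : d ≠ 0) (m c : ℕ) :
    centralExtensionBound d m c < centralExtensionBound d (m + 1) (c + 1) := by
  have h := centralExtensionBound_succ d m 0 c
  rw [add_zero] at h
  lia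

theorem two_mul_choose_two (d : ℕ) : 2 * (d.choose 2 : ℤ) = d * (d - 1) := by
  induction d with
  | zero => simp
  | succ d ih =>
    rw [Nat.choose_succ_succ' d 1, Nat.choose_one_right]
    push_cast
    linear_combination ih

theorem sum_Icc_sub_add_choose_two {d c : ℕ} (hc : d ≠ 0 → 1 ≤ c) :
    ∑ i ∈ Finset.Icc 2 (min d c), ((d : ℤ) - i) + (d - 1 : ℕ) + (d - c).choose 2 = d.choose 2 := by
  obtain rfl | hd := eq_or_ne d 0
  · simp
  induction c, hc hd using Nat.le_induction with
  | base =>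
    have h := choose_two_sub d 0
    rw [Finset.Icc_eq_empty (by lia), Finset.sum_empty]
    lia
  | succ c hc ih =>
    have h := choose_two_sub d c
    obtain hdc | hcd := le_or_gt d c
    · rw [min_eq_left (by lia)] at ih ⊢
      lia
    · rw [min_eq_right hcd.le] at ih
      rw [min_eq_right hcd, Finset.sum_Icc_succ_top (by lia)]
      lia

theorem raiBound_add_eq_centralExtensionBound {d m c : ℕ} (hc : d ≠ 0 → 1 ≤ c) :
    raiBound (m + d) m c + m = centralExtensionBound d m c := by
  have hsum := sum_Icc_sub_add_choose_two hc
  have hhalf : (((m + d : ℕ) : ℤ) - m - 1) * ((m + d : ℕ) + m) / 2 = d * m + d.choose 2 - m := by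
    refine Int.ediv_eq_of_eq_mul_right two_ne_zero ?_
    push_cast
    linear_combination -two_mul_choose_two d
  rw [raiBound, hhalf, Nat.add_sub_cancel_left, centralExtensionBound]
  push_cast at hsum ⊢
  simp only [add_sub_cancel_left]
  linear_combination -hsum

/-- The bound `centralExtensionBound` at the invariants of `L`. -/
noncomputable def derivedBound (K L : Type*) [Field K] [LieRing L] [LieAlgebra K L] : ℕ :=
  centralExtensionBound (finrank K L - finrank K (lowerCentral K L 1))
    (finrank K (lowerCentral K L 1)) (LieModule.nilpotencyLength L L)

namespace IsCentralExtension

variable {p : E →ₗ⁅K⁆ L}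

theorem isSpannedMod_lowerCentral_one (hp : IsCentralExtension p) {B : Finset E}
    (hB : lowerCentral K L 0 ≤ Submodule.span K (p '' B) ⊔ lowerCentral K L 1) :
    IsSpannedMod (B.card.choose 2) (lowerCentral K E 1) (lowerCentral K E 2) := by
  classical
  let T := (B.offDiag.image Sym2.mk.uncurry).image fun q => ⁅q.out.1, q.out.2⁆
  have lie_mem_span (a) (ha : a ∈ B) (b) (hb : b ∈ B) :
      ⁅a, b⁆ ∈ Submodule.span K (T : Set E) := by
    obtain rfl | hab := eq_or_ne a b
    · rw [lie_self]
      exact zero_mem _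
    have hmem : ⁅s(a, b).out.1, s(a, b).out.2⁆ ∈ Submodule.span K (T : Set E) :=
      Submodule.subset_span (Finset.mem_image_of_mem _
        (Finset.mem_image.2 ⟨(a, b), Finset.mem_offDiag.2 ⟨ha, hb, hab⟩, rfl⟩))
    obtain hout | hout := (Sym2.mk_eq_mk_iff (p := s(a, b).out) (q := (a, b))).1 s(a, b).out_eq
    · rwa [hout] at hmem
    · rw [hout] at hmem
      exact lie_mem_swap.1 hmem
  refine ⟨T, Finset.card_image_le.trans (Sym2.card_image_offDiag B).le, ?_⟩
  exact hp.lowerCentral_succ_le_of_le_span hB hB le_sup_right fun a ha b hb =>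
    Submodule.mem_sup_left (lie_mem_span a ha b hb)

theorem isSpannedMod_lowerCentral_succ [FiniteDimensional K L] (hp : IsCentralExtension p)
    {B : Finset E} (hB : lowerCentral K L 0 ≤ Submodule.span K (p '' B) ⊔ lowerCentral K L 1)
    {k r : ℕ} (hr : finrank K (lowerCentral K L k) = finrank K (lowerCentral K L (k + 1)) + r + 1) :
    IsSpannedMod (r * B.card + min B.card (k + 1)) (lowerCentral K E (k + 1))
      (lowerCentral K E (k + 2)) := by
  classical
  have hlt : lowerCentral K L (k + 1) < lowerCentral K L k :=
    (lowerCentral_antitone k.le_succ).lt_of_ne fun h => by rw [h] at hr; lia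
  obtain ⟨_, hpw, hnotMem⟩ := exists_isLeftNormed_notMem hB hlt
  obtain ⟨w, hw, rfl⟩ := hpw.exists_lift
  obtain ⟨S, hSB, hScard, hwS⟩ := hw.exists_finset
  obtain ⟨A, hAcard, hA⟩ := (isSpannedMod_finrank_sub (sup_le
    ((Submodule.span_singleton_le_iff_mem _ _).2 hpw.mem_lowerCentral) hlt.le)).exists_lift
    hp.surjective
  rw [finrank_span_singleton_sup hnotMem, hr, show ∀ t, t + r + 1 - (t + 1) = r by lia] at hAcard
  let T : Finset E := Finset.image₂ (⁅·, ·⁆) A B ∪ S.image (⁅w, ·⁆)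
  have lie_mem {t : E} (ht : t ∈ T) : t ∈ Submodule.span K (T : Set E) ⊔ lowerCentral K E (k + 2) :=
    Submodule.mem_sup_left (Submodule.subset_span ht)
  refine ⟨T, ?_, hp.lowerCentral_succ_le_of_isLeftNormed (A := A) hB ?_ le_sup_right hSB hwS ?_ ?_⟩
  · refine (Finset.card_union_le _ _).trans (add_le_add ?_ ?_)
    · exact (Finset.card_image₂_le _ _ _).trans (Nat.mul_le_mul_right _ hAcard)
    · exact Finset.card_image_le.trans (le_min (Finset.card_le_card hSB) hScard)
  · rwa [Set.image_insert_eq, Submodule.span_insert, sup_comm (Submodule.span K {p w}), sup_assoc]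
  · exact fun a ha b hb => lie_mem (Finset.mem_union_left _ (Finset.mem_image₂_of_mem ha hb))
  · exact fun s hs => lie_mem (Finset.mem_union_right _ (Finset.mem_image_of_mem _ hs))

theorem isSpannedMod_lowerCentral [FiniteDimensional K L] [LieRing.IsNilpotent L]
    (hp : IsCentralExtension p) {k : ℕ} (hk : k < LieModule.nilpotencyLength L L) :
    IsSpannedMod (centralExtensionBound (finrank K L - finrank K (lowerCentral K L 1))
      (finrank K (lowerCentral K L 1) - finrank K (lowerCentral K L (k + 1))) (k + 1))
      (lowerCentral K E 1) (lowerCentral K E (k + 2)) := by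
  obtain ⟨B, hBcard, hB⟩ := (isSpannedMod_finrank_sub
    (lowerCentral_antitone (R := K) (L := L) zero_le_one)).exists_lift hp.surjective
  rw [lowerCentral_zero, finrank_top] at hBcard
  induction k with
  | zero =>
    rw [Nat.sub_self, centralExtensionBound_zero_one]
    exact (hp.isSpannedMod_lowerCentral_one hB).mono (Nat.choose_le_choose 2 hBcard)
  | succ k ih =>
    have hle : finrank K (lowerCentral K L (k + 1)) ≤ finrank K (lowerCentral K L 1) :=
      Submodule.finrank_mono (lowerCentral_antitone (by lia))
    obtain ⟨r, hr⟩ := Nat.exists_eq_add_of_lt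
      (Submodule.finrank_lt_finrank_of_lt (lowerCentral_succ_lt (R := K) hk))
    have hdrop : finrank K (lowerCentral K L 1) - finrank K (lowerCentral K L (k + 2)) =
        finrank K (lowerCentral K L 1) - finrank K (lowerCentral K L (k + 1)) + r + 1 := by lia
    rw [hdrop, centralExtensionBound_succ]
    refine (ih (by lia)).trans ((hp.isSpannedMod_lowerCentral_succ hB hr).mono ?_)
    gcongr

theorem isSpannedMod_derivedBound [FiniteDimensional K L] [LieRing.IsNilpotent L]
    (hp : IsCentralExtension p) : IsSpannedMod (derivedBound K L) (lowerCentral K E 1) ⊥ := by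
  have hLbot := lowerCentral_eq_bot_iff (R := K) (L := L).2 le_rfl
  rw [derivedBound]
  generalize hc : LieModule.nilpotencyLength L L = c at hLbot ⊢
  have hEbot : lowerCentral K E (c + 1) = ⊥ := hp.lowerCentral_succ_eq_bot hLbot
  cases c with
  | zero => exact ⟨∅, Nat.zero_le _, hEbot.le.trans bot_le⟩
  | succ k =>
    have hspan := hp.isSpannedMod_lowerCentral (k := k) (by lia)
    rwa [hLbot, finrank_bot, Nat.sub_zero, hEbot] at hspan

end IsCentralExtension

end CentralExtensionBound

section CentralQuotient

variable {K E L Q : Type*} [Field K] [LieRing E] [LieAlgebra K E] [LieRing L] [LieAlgebra K L]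
  [LieRing Q] [LieAlgebra K Q]

theorem nilpotencyLength_le_max_one_of_disjoint [LieRing.IsNilpotent L] [LieRing.IsNilpotent Q]
    {r : L →ₗ⁅K⁆ Q} (hr : Function.Surjective r)
    (h : Disjoint (lowerCentral K L 1) (LinearMap.ker (r : L →ₗ[K] Q))) :
    LieModule.nilpotencyLength L L ≤ max (LieModule.nilpotencyLength Q Q) 1 := by
  refine (lowerCentral_eq_bot_iff (R := K)).1 (le_bot_iff.1 (h ?_ ?_))
  · exact lowerCentral_antitone (le_max_right _ 1)
  · rw [LinearMap.le_ker_iff_map, map_lowerCentral hr, lowerCentral_eq_bot_iff]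
    exact le_max_left _ 1

theorem nilpotencyLength_pos (L : Type*) [LieRing L] [LieRing.IsNilpotent L] [Nontrivial L] :
    0 < LieModule.nilpotencyLength L L := by
  rw [Nat.pos_iff_ne_zero, Ne, LieModule.nilpotencyLength_eq_zero_iff]
  exact not_subsingleton L

theorem finrank_sub_finrank_lowerCentral_one_pos [FiniteDimensional K L] [LieRing.IsNilpotent L]
    [Nontrivial L] : 0 < finrank K L - finrank K (lowerCentral K L 1) := by
  rw [Nat.sub_pos_iff_lt, ← finrank_top K L]
  exact Submodule.finrank_lt_finrank_of_lt (lowerCentral_succ_lt (nilpotencyLength_pos L))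

theorem finrank_add_finrank_ker_of_surjective [FiniteDimensional K L] {r : L →ₗ⁅K⁆ Q}
    (hr : Function.Surjective r) :
    finrank K Q + finrank K (LinearMap.ker (r : L →ₗ[K] Q)) = finrank K L := by
  rw [← LinearMap.finrank_range_add_finrank_ker (r : L →ₗ[K] Q), LinearMap.range_eq_top.2 hr,
    finrank_top]

theorem finrank_lowerCentral_add_finrank_inf_ker [FiniteDimensional K L] {r : L →ₗ⁅K⁆ Q}
    (hr : Function.Surjective r) (k : ℕ) :
    finrank K (lowerCentral K Q k) +
      finrank K ↥(lowerCentral K L k ⊓ LinearMap.ker (r : L →ₗ[K] Q)) =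
        finrank K (lowerCentral K L k) := by
  rw [← map_lowerCentral hr, finrank_map_add_finrank_inf_ker]

theorem finrank_sub_finrank_lowerCentral_one_le [FiniteDimensional K L] {r : L →ₗ⁅K⁆ Q}
    (hr : Function.Surjective r) :
    finrank K Q - finrank K (lowerCentral K Q 1) ≤
      finrank K L - finrank K (lowerCentral K L 1) := by
  have hdim := finrank_add_finrank_ker_of_surjective hr
  have hdim_derived := finrank_lowerCentral_add_finrank_inf_ker hr 1
  have hle : finrank K ↥(lowerCentral K L 1 ⊓ LinearMap.ker (r : L →ₗ[K] Q)) ≤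
      finrank K (LinearMap.ker (r : L →ₗ[K] Q)) := Submodule.finrank_mono inf_le_right
  lia

theorem derivedBound_lt_of_disjoint [FiniteDimensional K L] [LieRing.IsNilpotent L]
    {r : L →ₗ⁅K⁆ Q} (hr : Function.Surjective r) (hker : r.ker ≠ ⊥) (hn : finrank K L ≠ 1)
    (h : Disjoint (lowerCentral K L 1) (LinearMap.ker (r : L →ₗ[K] Q))) :
    derivedBound K Q < derivedBound K L := by
  have : LieRing.IsNilpotent Q := hr.lieAlgebra_isNilpotent
  have hdim := finrank_add_finrank_ker_of_surjective hr
  have hker_pos : 0 < finrank K (LinearMap.ker (r : L →ₗ[K] Q)) :=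
    Submodule.one_le_finrank_iff.2 fun hbot => hker ((LieSubmodule.toSubmodule_eq_bot _).1 hbot)
  have : Nontrivial L := Module.nontrivial_of_finrank_pos (R := K) (by lia)
  have hd := finrank_sub_finrank_lowerCentral_one_pos (K := K) (L := L)
  have hderived := finrank_lowerCentral_add_finrank_inf_ker hr 1
  rw [h.eq_bot, finrank_bot, add_zero] at hderived
  unfold derivedBound
  rw [hderived]
  set d := finrank K L - finrank K (lowerCentral K L 1)
  set m := finrank K (lowerCentral K L 1)
  have hlength : centralExtensionBound (finrank K Q - m) m (LieModule.nilpotencyLength Q Q) ≤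
      centralExtensionBound (finrank K Q - m) m (LieModule.nilpotencyLength L L) := by
    have hle := nilpotencyLength_le_max_one_of_disjoint hr h
    obtain hzero | hpos := Nat.eq_zero_or_pos (LieModule.nilpotencyLength Q Q)
    · have : Subsingleton Q := (LieModule.nilpotencyLength_eq_zero_iff Q Q).1 hzero
      simp [centralExtensionBound, finrank_zero_of_subsingleton]
    · exact centralExtensionBound_mono le_rfl le_rfl (by lia)
  calc centralExtensionBound (finrank K Q - m) m (LieModule.nilpotencyLength Q Q)
      ≤ centralExtensionBound (d - 1) m (LieModule.nilpotencyLength L L) :=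
        hlength.trans (centralExtensionBound_mono (by lia) le_rfl le_rfl)
    _ < centralExtensionBound (d - 1 + 1) m (LieModule.nilpotencyLength L L) :=
        centralExtensionBound_lt_succ_left _ (by lia)
    _ = centralExtensionBound d m (LieModule.nilpotencyLength L L) := by rw [Nat.sub_add_cancel hd]

namespace IsCentralExtension

theorem nilpotencyLength_le_succ [LieRing.IsNilpotent L] [LieRing.IsNilpotent Q] {r : L →ₗ⁅K⁆ Q}
    (hr : IsCentralExtension r) :
    LieModule.nilpotencyLength L L ≤ LieModule.nilpotencyLength Q Q + 1 :=
  (lowerCentral_eq_bot_iff (R := K)).1 <|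
    hr.lowerCentral_succ_eq_bot (lowerCentral_eq_bot_iff.2 le_rfl)

theorem derivedBound_lt_of_not_disjoint [FiniteDimensional K L] [LieRing.IsNilpotent L]
    {r : L →ₗ⁅K⁆ Q} (hr : IsCentralExtension r)
    (h : ¬Disjoint (lowerCentral K L 1) (LinearMap.ker (r : L →ₗ[K] Q))) :
    derivedBound K Q < derivedBound K L := by
  have : LieRing.IsNilpotent Q := hr.surjective.lieAlgebra_isNilpotent
  have hderived_lt : finrank K (lowerCentral K Q 1) < finrank K (lowerCentral K L 1) := by
    rw [← finrank_lowerCentral_add_finrank_inf_ker hr.surjective, Nat.lt_add_right_iff_pos]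
    exact Submodule.one_le_finrank_iff.2 fun hbot => h (disjoint_iff.2 hbot)
  have : Nontrivial L := by
    by_contra! hL
    exact h (Subsingleton.elim ⊥ (lowerCentral K L 1) ▸ disjoint_bot_left)
  have hd := finrank_sub_finrank_lowerCentral_one_le hr.surjective
  have hL := finrank_sub_finrank_lowerCentral_one_pos (K := K) (L := L)
  have hlength := hr.nilpotencyLength_le_succ
  unfold derivedBound
  generalize finrank K L - finrank K (lowerCentral K L 1) = d at hd hL ⊢
  obtain ⟨m, hm⟩ := Nat.exists_eq_add_one.2 (Nat.zero_lt_of_lt hderived_lt)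
  obtain ⟨c, hc⟩ := Nat.exists_eq_add_one.2 (nilpotencyLength_pos L)
  rw [hm] at hderived_lt ⊢
  rw [hc] at hlength ⊢
  exact (centralExtensionBound_mono hd (Nat.lt_succ_iff.1 hderived_lt)
    (Nat.succ_le_succ_iff.1 hlength)).trans_lt (centralExtensionBound_lt_succ_succ hL.ne' m c)

theorem ker_eq_bot_of_derivedBound_le [FiniteDimensional K L] [LieRing.IsNilpotent L]
    {q : E →ₗ⁅K⁆ L} {r : L →ₗ⁅K⁆ Q} (hq : Function.Surjective q)
    (hrq : IsCentralExtension (r.comp q)) (hL : finrank K L ≠ 1)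
    (hbound : derivedBound K L ≤ finrank K (lowerCentral K E 1)) : r.ker = ⊥ := by
  have hr : IsCentralExtension r := .of_comp hq hrq
  have : LieRing.IsNilpotent Q := hr.surjective.lieAlgebra_isNilpotent
  have : FiniteDimensional K Q := Module.Finite.of_surjective (r : L →ₗ[K] Q) hr.surjective
  have hle : derivedBound K L ≤ derivedBound K Q :=
    hbound.trans hrq.isSpannedMod_derivedBound.finrank_le
  by_contra hker
  by_cases h : Disjoint (lowerCentral K L 1) (LinearMap.ker (r : L →ₗ[K] Q))
  · exact (derivedBound_lt_of_disjoint hr.surjective hker hL h).not_ge hle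
  · exact (hr.derivedBound_lt_of_not_disjoint h).not_ge hle

end IsCentralExtension

end CentralQuotient

section Quotient

variable {R L L' : Type*} [CommRing R] [LieRing L] [LieAlgebra R L] [LieRing L'] [LieAlgebra R L']

/-- The quotient map of a Lie algebra by an ideal as a homomorphism of Lie algebras;
`LieSubmodule.Quotient.mk'` is only a homomorphism of modules. -/
def lieQuotientMk (I : LieIdeal R L) : L →ₗ⁅R⁆ L ⧸ I :=
  { (LieSubmodule.Quotient.mk' I : L →ₗ[R] L ⧸ I) with
    map_lie' := fun {x y} => LieSubmodule.Quotient.mk_bracket _ x y }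

theorem lieQuotientMk_surjective (I : LieIdeal R L) : Function.Surjective (lieQuotientMk I) :=
  LieSubmodule.Quotient.surjective_mk' I

theorem ker_lieQuotientMk (I : LieIdeal R L) : (lieQuotientMk I).ker = I :=
  LieSubmodule.ext _ _ fun _ => LieSubmodule.Quotient.mk_eq_zero I

/-- The homomorphism `F / [R, F] → L` induced by `π : F → L` with kernel `R`. It is a central
extension if `π` is surjective, and its kernel meets `(F / [R, F])²` in `M(L)` if `F` is free. -/
def freeCentralExtension (π : L →ₗ⁅R⁆ L') : L ⧸ ⁅π.ker, (⊤ : LieIdeal R L)⁆ →ₗ⁅R⁆ L' :=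
  { (⁅π.ker, (⊤ : LieIdeal R L)⁆ : LieIdeal R L).toSubmodule.liftQ (π : L →ₗ[R] L')
      (LieSubmodule.lie_le_left _ _) with
    map_lie' := by
      intro x y
      obtain ⟨x, rfl⟩ := lieQuotientMk_surjective _ x
      obtain ⟨y, rfl⟩ := lieQuotientMk_surjective _ y
      exact π.map_lie x y }

theorem isCentralExtension_freeCentralExtension {π : L →ₗ⁅R⁆ L'} (hπ : Function.Surjective π) :
    IsCentralExtension (freeCentralExtension π) where
  surjective y := by
    obtain ⟨x, rfl⟩ := hπ y
    exact ⟨lieQuotientMk _ x, rfl⟩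
  ker_le_center x hx y := by
    obtain ⟨x, rfl⟩ := lieQuotientMk_surjective _ x
    obtain ⟨y, rfl⟩ := lieQuotientMk_surjective _ y
    rw [← LieHom.map_lie, ← LieHom.mem_ker, ker_lieQuotientMk]
    exact lie_mem_swap.1 (LieSubmodule.lie_mem_lie hx (LieSubmodule.mem_top y))

theorem IsCentralExtension.comp_lieQuotientMk_map_center {q : L →ₗ⁅R⁆ L'}
    (hq : IsCentralExtension q) :
    IsCentralExtension ((lieQuotientMk ((LieAlgebra.center R L).map q)).comp q) where
  surjective := (lieQuotientMk_surjective _).comp hq.surjective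
  ker_le_center x hx := by
    have hqx : q x ∈ (LieAlgebra.center R L).map q := by
      rw [← ker_lieQuotientMk ((LieAlgebra.center R L).map q)]
      exact hx
    obtain ⟨z, hz⟩ := LieIdeal.mem_map_of_surjective hq.surjective hqx
    have hsub : x - z ∈ LieAlgebra.center R L :=
      hq.ker_le_center (by rw [LieHom.mem_ker, map_sub, hz, sub_self])
    exact sub_add_cancel x (z : L) ▸ add_mem hsub z.2

end Quotient

section SchurMultiplier

variable {K : Type} [Field K]

theorem lieSchurMultiplierDim_eq_finrank_inf_ker {X L : Type} [LieRing L] [LieAlgebra K L]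
    (π : FreeLieAlgebra K X →ₗ⁅K⁆ L) :
    lieSchurMultiplierDim K X π =
      finrank K ↥(lowerCentral K (FreeLieAlgebra K X ⧸ ⁅π.ker, (⊤ : LieIdeal K _)⁆) 1 ⊓
        LinearMap.ker (freeCentralExtension π : _ →ₗ[K] L)) := by
  rw [← map_lowerCentral (lieQuotientMk_surjective _), Submodule.map_inf_eq_map_inf_comap,
    inf_comm]
  exact finrank_quotient_comap_subtype _ _

theorem lieSchurMultiplierDim_add_finrank_lowerCentral_one {X L : Type} [LieRing L]
    [LieAlgebra K L] [FiniteDimensional K L] [LieRing.IsNilpotent L]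
    {π : FreeLieAlgebra K X →ₗ⁅K⁆ L} (hπ : Function.Surjective π) :
    lieSchurMultiplierDim K X π + finrank K (lowerCentral K L 1) =
      finrank K (lowerCentral K (FreeLieAlgebra K X ⧸ ⁅π.ker, (⊤ : LieIdeal K _)⁆) 1) := by
  have hq := isCentralExtension_freeCentralExtension hπ
  have := hq.isSpannedMod_derivedBound.finiteDimensional
  rw [lieSchurMultiplierDim_eq_finrank_inf_ker, add_comm, ← map_lowerCentral hq.surjective,
    finrank_map_add_finrank_inf_ker]

end SchurMultiplier

section Capable

variable {K L : Type} [Field K] [LieRing L] [LieAlgebra K L]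

theorem lieIsCapable_of_ker_eq_center {E : Type} [LieRing E] [LieAlgebra K E] {q : E →ₗ⁅K⁆ L}
    (hq : Function.Surjective q) (hker : q.ker = LieAlgebra.center K E) : lieIsCapable K L := by
  refine ⟨E, inferInstance, inferInstance, ?_⟩
  rw [← hker]
  have hrange : (q.range : Set L) = (⊤ : LieSubalgebra K L) := by
    rw [(LieHom.range_eq_top q).2 hq]
  exact ⟨q.quotKerEquivRange.trans ((LieEquiv.ofEq _ _ hrange).trans LieSubalgebra.topEquiv)⟩

theorem IsCentralExtension.lieIsCapable_of_derivedBound_le [FiniteDimensional K L]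
    [LieRing.IsNilpotent L] {E : Type} [LieRing E] [LieAlgebra K E] {q : E →ₗ⁅K⁆ L}
    (hq : IsCentralExtension q) (hL : finrank K L ≠ 1)
    (hbound : derivedBound K L ≤ finrank K (lowerCentral K E 1)) : lieIsCapable K L := by
  refine lieIsCapable_of_ker_eq_center hq.surjective (le_antisymm hq.ker_le_center ?_)
  have hmap : (LieAlgebra.center K E).map q = ⊥ := by
    rw [← ker_lieQuotientMk ((LieAlgebra.center K E).map q)]
    exact ker_eq_bot_of_derivedBound_le hq.surjective hq.comp_lieQuotientMk_map_center hL hbound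
  exact LieIdeal.map_le_iff_le_comap.1 hmap.le

theorem isNilpotent_of_lieNilpotencyClass {c : ℕ} (hc : lieNilpotencyClass K L c) :
    LieRing.IsNilpotent L :=
  LieModule.IsNilpotent.mk L hc.1

theorem nilpotencyLength_eq_of_lieNilpotencyClass [LieRing.IsNilpotent L] {c : ℕ}
    (hc : lieNilpotencyClass K L c) : LieModule.nilpotencyLength L L = c := by
  refine le_antisymm ?_ (le_of_not_gt fun hlt => hc.2 _ hlt ?_)
  · rw [← lowerCentral_eq_bot_iff (R := K), LieSubmodule.toSubmodule_eq_bot]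
    exact hc.1
  · rw [← LieSubmodule.toSubmodule_eq_bot]
    exact lowerCentral_eq_bot_iff.2 le_rfl

theorem raiBound_add_finrank_lowerCentral_one [FiniteDimensional K L] [LieRing.IsNilpotent L] :
    raiBound (finrank K L) (finrank K (lowerCentral K L 1)) (LieModule.nilpotencyLength L L) +
      finrank K (lowerCentral K L 1) = derivedBound K L := by
  obtain ⟨d, hd⟩ := Nat.exists_eq_add_of_le (Submodule.finrank_le (lowerCentral K L 1))
  rw [derivedBound, hd, Nat.add_sub_cancel_left]
  refine raiBound_add_eq_centralExtensionBound fun hd0 => ?_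
  have : Nontrivial L := Module.nontrivial_of_finrank_pos (R := K) (by lia)
  exact nilpotencyLength_pos L

end Capable

theorem capable_of_attains_bound_general (K L : Type) [Field K] [LieRing L] [LieAlgebra K L]
    [FiniteDimensional K L] (n m c : ℕ) (hn1 : n ≠ 1)
    (hn : Module.finrank K L = n) (hm : lieDerivedDim K L = m)
    (hc : lieNilpotencyClass K L c)
    (hM : ∃ (X : Type) (π : FreeLieAlgebra K X →ₗ⁅K⁆ L), Function.Surjective π ∧
      (lieSchurMultiplierDim K X π : ℤ) = raiBound n m c) :
    lieIsCapable K L := by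
  obtain ⟨X, π, hπ, hattains⟩ := hM
  have : LieRing.IsNilpotent L := isNilpotent_of_lieNilpotencyClass hc
  obtain rfl := nilpotencyLength_eq_of_lieNilpotencyClass hc
  obtain rfl : finrank K (lowerCentral K L 1) = m := hm
  subst hn
  refine (isCentralExtension_freeCentralExtension hπ).lieIsCapable_of_derivedBound_le hn1 ?_
  have hrai := raiBound_add_finrank_lowerCentral_one (K := K) (L := L)
  have hschur := lieSchurMultiplierDim_add_finrank_lowerCentral_one hπ
  lia

/-- an `n`-dimensional nilpotent Lie algebra of class `c ≥ 3` with
`dim L² = m ≥ 2` whose Schur multiplier attains Rai's bound is capable. -/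
theorem capable_of_attains_bound (K L : Type) [Field K] [LieRing L] [LieAlgebra K L]
    [FiniteDimensional K L] (n m c : ℕ) (hc3 : 3 ≤ c) (hm2 : 2 ≤ m)
    (hn : Module.finrank K L = n) (hm : lieDerivedDim K L = m)
    (hc : lieNilpotencyClass K L c)
    (hM : ∃ (X : Type) (π : FreeLieAlgebra K X →ₗ⁅K⁆ L), Function.Surjective π ∧
      (lieSchurMultiplierDim K X π : ℤ) = raiBound n m c) :
    lieIsCapable K L := by
  have hmn : m ≤ n := hm ▸ hn ▸ Submodule.finrank_le _
  exact capable_of_attains_bound_general K L n m c (by lia) hn hm hc hM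
end

section
/- The 5-dimensional filiform Lie algebra L_{5,7} = ⟨x₁,…,x₅ : [x₁,x₂]=x₃, [x₁,x₃]=x₄, [x₁,x₄]=x₅⟩ has Schur multiplier of dimension 3; with n = 5, m = 3, c = 4, this equals (1/2)(n−m−1)(n+m) − Σ_{i=2}^{min(n−m,c)} (n−m−i) − 1. -/
open Module

/-- The filiform Lie algebra `L_{5,7} = ⟨x₁,…,x₅ : [x₁,x₂]=x₃, [x₁,x₃]=x₄, [x₁,x₄]=x₅⟩`,
all other brackets of generators trivial. -/
noncomputable def lieL57 (K : Type) [Field K] : Type :=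
  let F := FreeLieAlgebra K (Fin 5)
  let x : Fin 5 → F := FreeLieAlgebra.of K
  F ⧸ LieSubmodule.lieSpan K F
    {⁅x 0, x 1⁆ - x 2, ⁅x 0, x 2⁆ - x 3, ⁅x 0, x 3⁆ - x 4, ⁅x 0, x 4⁆,
     ⁅x 1, x 2⁆, ⁅x 1, x 3⁆, ⁅x 1, x 4⁆, ⁅x 2, x 3⁆, ⁅x 2, x 4⁆, ⁅x 3, x 4⁆}

noncomputable instance (K : Type) [Field K] : LieRing (lieL57 K) := by
  unfold lieL57; infer_instance
noncomputable instance (K : Type) [Field K] : LieAlgebra K (lieL57 K) := by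
  unfold lieL57; infer_instance

/-!
For trivial coefficients `A` and a free presentation `0 → R → F → L → 0`, the transgression
`Hom(F/[R,F], A) → H²(L, A)` is onto because `H²(F, A) = 0`, and its kernel consists of the maps
vanishing on `(R ∩ F²)/[R,F]`. Hence `dim M(L) = dim H²(L, K)`, whatever the presentation. For
`L_{5,7}` the cocycle condition leaves, modulo coboundaries, exactly the classes of `x₀* ∧ x₄*`,
`x₁* ∧ x₂*` and `x₁* ∧ x₄* - x₂* ∧ x₃*` (generators indexed from `0`), so this dimension is `3`.
-/

open LieModule LieModule.Cohomology

set_option maxSynthPendingDepth 3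

section LinearAlgebra

variable {K V W W' : Type*} [AddCommGroup V] [AddCommGroup W] [AddCommGroup W']

theorem finrank_eq_of_surjective_of_ker_eq [Ring K] [Module K V] [Module K W] [Module K W']
    {f : V →ₗ[K] W} {g : V →ₗ[K] W'} (hf : Function.Surjective f) (hg : Function.Surjective g)
    (h : LinearMap.ker f = LinearMap.ker g) : finrank K W = finrank K W' := by
  rw [← (f.quotKerEquivOfSurjective hf).finrank_eq, h, (g.quotKerEquivOfSurjective hg).finrank_eq]

theorem exists_comp_eq_of_ker_le [DivisionRing K] [Module K V] [Module K W] [Module K W']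
    {g : V →ₗ[K] W} {θ : V →ₗ[K] W'} (h : LinearMap.ker g ≤ LinearMap.ker θ) :
    ∃ f : W →ₗ[K] W', f ∘ₗ g = θ := by
  obtain ⟨r, hr⟩ := ((LinearMap.ker g).liftQ g le_rfl).exists_leftInverse_of_injective
    (Submodule.ker_liftQ_eq_bot _ _ le_rfl le_rfl)
  refine ⟨(LinearMap.ker g).liftQ θ h ∘ₗ r, LinearMap.ext fun v => ?_⟩
  have hrv : r (g v) = (LinearMap.ker g).mkQ v := LinearMap.congr_fun hr ((LinearMap.ker g).mkQ v)
  rw [LinearMap.comp_apply, LinearMap.comp_apply, hrv, Submodule.mkQ_apply, Submodule.liftQ_apply]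

end LinearAlgebra

section LowerCentralSeries

variable {R L : Type*} [CommRing R] [LieRing L] [LieAlgebra R L]

theorem lie_mem_lowerCentralSeries_succ_s16 (x : L) {k : ℕ} {m : L}
    (hm : m ∈ lowerCentralSeries R L L k) : ⁅x, m⁆ ∈ lowerCentralSeries R L L (k + 1) := by
  rw [lowerCentralSeries_succ]
  exact LieSubmodule.lie_mem_lie (LieSubmodule.mem_top x) hm

theorem lie_mem_lowerCentralSeries_one (x y : L) : ⁅x, y⁆ ∈ lowerCentralSeries R L L 1 :=
  lie_mem_lowerCentralSeries_succ_s16 x (LieSubmodule.mem_top y)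

theorem lowerCentralSeries_succ_le_of_lie_mem {N : Submodule R L} {k : ℕ}
    (h : ∀ x : L, ∀ m ∈ lowerCentralSeries R L L k, ⁅x, m⁆ ∈ N) :
    (lowerCentralSeries R L L (k + 1)).toSubmodule ≤ N := by
  rw [lowerCentralSeries_succ, LieSubmodule.lieIdeal_oper_eq_linear_span', Submodule.span_le]
  rintro _ ⟨x, -, m, hm, rfl⟩
  exact h x m hm

end LowerCentralSeries

section Transgression

variable {K F L : Type*} [CommRing K] [LieRing F] [LieAlgebra K F] [LieRing L] [LieAlgebra K L]

theorem lie_sub_lie_mem_of_map_eq (π : F →ₗ⁅K⁆ L) {u u' v v' : F} (hu : π u = π u')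
    (hv : π v = π v') : ⁅u, v⁆ - ⁅u', v'⁆ ∈ ⁅π.ker, (⊤ : LieIdeal K F)⁆ := by
  have mem_ker {a a' : F} (h : π a = π a') : a - a' ∈ π.ker := by
    rw [LieHom.mem_ker, map_sub, h, sub_self]
  have hsplit : ⁅u, v⁆ - ⁅u', v'⁆ = ⁅u - u', v⁆ - ⁅v - v', u'⁆ := by
    rw [sub_lie, sub_lie, ← lie_skew v u', ← lie_skew v' u']; abel
  rw [hsplit]
  exact sub_mem (LieSubmodule.lie_mem_lie (mem_ker hu) (LieSubmodule.mem_top v))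
    (LieSubmodule.lie_mem_lie (mem_ker hv) (LieSubmodule.mem_top u'))

/-- The second cohomology `H²(L, A)`: `2`-cocycles modulo the range of `d₁₂`. -/
abbrev lieH2 (K L A : Type*) [CommRing K] [LieRing L] [LieAlgebra K L] [AddCommGroup A]
    [Module K A] [LieRingModule L A] [LieModule K L A] : Type _ :=
  twoCocycle K L A ⧸ (LinearMap.range (d₁₂ K L A)).submoduleOf (twoCocycle K L A)

/-- The vector space underlying `F / [R, F]`, where `R = ker π`. -/
abbrev KerLieQuotient (π : F →ₗ⁅K⁆ L) : Type _ :=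
  F ⧸ (⁅π.ker, (⊤ : LieIdeal K F)⁆ : LieIdeal K F).toSubmodule

variable {A : Type*} [AddCommGroup A] [Module K A] {π : F →ₗ⁅K⁆ L} {s : L →ₗ[K] F}

theorem mk_lie_eq_of_map_eq {u u' v v' : F} (hu : π u = π u') (hv : π v = π v') :
    (Submodule.Quotient.mk ⁅u, v⁆ : KerLieQuotient π) = Submodule.Quotient.mk ⁅u', v'⁆ :=
  (Submodule.Quotient.eq _).2 (lie_sub_lie_mem_of_map_eq π hu hv)

/-- The linear map sending `θ : F / [R, F] → A` to the `2`-cochain `(x, y) ↦ θ [s x, s y]`. -/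
def transgressionCochain (A : Type*) [AddCommGroup A] [Module K A] (π : F →ₗ⁅K⁆ L)
    (s : L →ₗ[K] F) : (KerLieQuotient π →ₗ[K] A) →ₗ[K] twoCochain K L A where
  toFun θ :=
    ⟨LinearMap.mk₂ K (fun x y => θ (Submodule.Quotient.mk ⁅s x, s y⁆))
      (by simp) (by simp) (by simp) (by simp), fun x => by simp⟩
  map_add' θ θ' := rfl
  map_smul' t θ := rfl

theorem transgressionCochain_apply (θ : KerLieQuotient π →ₗ[K] A) (x y : L) :
    transgressionCochain A π s θ x y = θ (Submodule.Quotient.mk ⁅s x, s y⁆) := rfl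

theorem transgressionCochain_map (hs : ∀ x, π (s x) = x) (θ : KerLieQuotient π →ₗ[K] A)
    (u v : F) : transgressionCochain A π s θ (π u) (π v) = θ (Submodule.Quotient.mk ⁅u, v⁆) := by
  rw [transgressionCochain_apply, mk_lie_eq_of_map_eq (hs (π u)) (hs (π v))]

variable [LieRingModule L A] [LieModule K L A] [LieModule.IsTrivial L A]

theorem transgressionCochain_mem_twoCocycle (hs : ∀ x, π (s x) = x)
    (θ : KerLieQuotient π →ₗ[K] A) : transgressionCochain A π s θ ∈ twoCocycle K L A := by
  rw [mem_twoCocycle_iff_of_trivial]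
  intro x y z
  rw [← hs x, ← hs y, ← hs z]
  simp only [← LieHom.map_lie, transgressionCochain_map hs, ← map_add, ← Submodule.Quotient.mk_add]
  rw [leibniz_lie]

variable (A) in
/-- The transgression `Hom(F / [R, F], A) → H²(L, A)` of the central extension `F / [R, F]` of `L`
with trivial coefficients `A`, computed with a linear section `s` of `π`. -/
def transgression (hs : ∀ x, π (s x) = x) : (KerLieQuotient π →ₗ[K] A) →ₗ[K] lieH2 K L A :=
  Submodule.mkQ _ ∘ₗ
    (transgressionCochain A π s).codRestrict _ (transgressionCochain_mem_twoCocycle hs)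

theorem mem_ker_transgression {hs : ∀ x, π (s x) = x} {θ : KerLieQuotient π →ₗ[K] A} :
    θ ∈ LinearMap.ker (transgression A hs) ↔
      ∃ f : L →ₗ[K] A, ∀ u v : F, θ (Submodule.Quotient.mk ⁅u, v⁆) = f (π ⁅u, v⁆) := by
  have mem_range : θ ∈ LinearMap.ker (transgression A hs) ↔
      ∃ f, d₁₂ K L A f = transgressionCochain A π s θ := by
    rw [LinearMap.mem_ker, transgression, LinearMap.comp_apply, Submodule.mkQ_apply,
      Submodule.Quotient.mk_eq_zero]
    rfl
  rw [mem_range]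
  constructor
  · rintro ⟨f, hf⟩
    refine ⟨-f, fun u v => ?_⟩
    rw [← transgressionCochain_map hs, ← hf, d₁₂_apply_apply_ofTrivial, LieHom.map_lie,
      LinearMap.neg_apply]
  · rintro ⟨f, hf⟩
    refine ⟨-f, DFunLike.ext _ _ fun x => LinearMap.ext fun y => ?_⟩
    rw [d₁₂_apply_apply_ofTrivial, transgressionCochain_apply, hf, LieHom.map_lie, hs, hs,
      LinearMap.neg_apply, neg_neg]

/-- Lift `π` to the extension of `L` by `A` defined by `c` and take the `A`-component. -/
theorem exists_linearMap_apply_lie_eq_twoCocycle {X : Type*} (π : FreeLieAlgebra K X →ₗ⁅K⁆ L)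
    (c : twoCocycle K L A) :
    ∃ θ : FreeLieAlgebra K X →ₗ[K] A, ∀ u v, θ ⁅u, v⁆ = (c : twoCochain K L A) (π u) (π v) := by
  let E := LieAlgebra.ofTwoCocycle c
  let fst : E →ₗ⁅K⁆ L :=
    { toFun := fun e => ((LieAlgebra.ofProd c).symm e).1
      map_add' := fun _ _ => rfl
      map_smul' := fun _ _ => rfl
      map_lie' := rfl }
  let snd : E →ₗ[K] A :=
    { toFun := fun e => ((LieAlgebra.ofProd c).symm e).2
      map_add' := fun _ _ => rfl
      map_smul' := fun _ _ => rfl }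
  have snd_lie (e e' : E) : snd ⁅e, e'⁆ = (c : twoCochain K L A) (fst e) (fst e') := by
    change (c : twoCochain K L A) (fst e) (fst e') + ⁅fst e, snd e'⁆ - ⁅fst e', snd e⁆ = _
    rw [trivial_lie_zero, trivial_lie_zero, add_zero, sub_zero]
  let φ : FreeLieAlgebra K X →ₗ⁅K⁆ E :=
    FreeLieAlgebra.lift K fun i => LieAlgebra.ofProd c (π (FreeLieAlgebra.of K i), 0)
  have hφ : fst.comp φ = π := FreeLieAlgebra.hom_ext fun i =>
    congrArg fst (FreeLieAlgebra.lift_of_apply _ i)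
  refine ⟨snd ∘ₗ φ, fun u v => ?_⟩
  rw [← hφ]
  exact (congrArg snd (φ.map_lie u v)).trans (snd_lie _ _)

theorem transgression_surjective {X : Type*} {π : FreeLieAlgebra K X →ₗ⁅K⁆ L}
    {s : L →ₗ[K] FreeLieAlgebra K X} (hs : ∀ x, π (s x) = x) :
    Function.Surjective (transgression A hs) := by
  intro q
  obtain ⟨c, rfl⟩ := Submodule.mkQ_surjective _ q
  obtain ⟨θ, hθ⟩ := exists_linearMap_apply_lie_eq_twoCocycle π c
  have hker : (⁅π.ker, (⊤ : LieIdeal K (FreeLieAlgebra K X))⁆ : LieIdeal K _).toSubmodule ≤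
      LinearMap.ker θ := by
    rw [LieSubmodule.lieIdeal_oper_eq_linear_span', Submodule.span_le]
    rintro _ ⟨r, hr, v, -, rfl⟩
    rw [LieHom.mem_ker] at hr
    rw [SetLike.mem_coe, LinearMap.mem_ker, hθ, hr, map_zero, LinearMap.zero_apply]
  have hcochain : transgressionCochain A π s (Submodule.liftQ _ θ hker) = c :=
    DFunLike.ext _ _ fun x => LinearMap.ext fun y => (hθ (s x) (s y)).trans (by rw [hs, hs])
  exact ⟨Submodule.liftQ _ θ hker, congrArg (Submodule.mkQ _) (Subtype.ext hcochain)⟩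

end Transgression

theorem mem_ker_transgression_iff_forall_mem_ker_inf {K F L A : Type*} [Field K] [LieRing F]
    [LieAlgebra K F] [LieRing L] [LieAlgebra K L] [AddCommGroup A] [Module K A] [LieRingModule L A]
    [LieModule K L A] [LieModule.IsTrivial L A] {π : F →ₗ⁅K⁆ L} {s : L →ₗ[K] F}
    {hs : ∀ x, π (s x) = x} {θ : KerLieQuotient π →ₗ[K] A} :
    θ ∈ LinearMap.ker (transgression A hs) ↔
      ∀ y ∈ π.ker ⊓ lowerCentralSeries K F F 1, θ (Submodule.Quotient.mk y) = 0 := by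
  rw [mem_ker_transgression]
  let θF : F →ₗ[K] A := θ ∘ₗ Submodule.mkQ _
  let πlin : F →ₗ[K] L := π
  constructor
  · rintro ⟨f, hf⟩ y ⟨hyker, hy⟩
    have hle : (lowerCentralSeries K F F 1).toSubmodule ≤ LinearMap.ker (θF - f ∘ₗ πlin) :=
      lowerCentralSeries_succ_le_of_lie_mem fun u v _ => sub_eq_zero.2 (hf u v)
    exact (sub_eq_zero.1 (hle hy)).trans ((congrArg f hyker).trans (map_zero f))
  · intro h
    let ι := (lowerCentralSeries K F F 1).toSubmodule.subtype
    have hker : LinearMap.ker (πlin ∘ₗ ι) ≤ LinearMap.ker (θF ∘ₗ ι) :=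
      fun y hy => h y ⟨hy, y.2⟩
    obtain ⟨f, hf⟩ := exists_comp_eq_of_ker_le hker
    exact ⟨f, fun u v =>
      (LinearMap.congr_fun hf ⟨⁅u, v⁆, lie_mem_lowerCentralSeries_one u v⟩).symm⟩

theorem lieSchurMultiplierDim_eq_finrank_lieH2 {K X L : Type} [Field K] [LieRing L]
    [LieAlgebra K L] {π : FreeLieAlgebra K X →ₗ⁅K⁆ L} (hπ : Function.Surjective π) :
    lieSchurMultiplierDim K X π = finrank K (lieH2 K L (TrivialLieModule K L K)) := by
  obtain ⟨s, hs⟩ := (π : FreeLieAlgebra K X →ₗ[K] L).exists_rightInverse_of_surjective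
    (LinearMap.range_eq_top.2 hπ)
  replace hs : ∀ x, π (s x) = x := LinearMap.congr_fun hs
  let P := (π.ker ⊓ lowerCentralSeries K _ (FreeLieAlgebra K X) 1).toSubmodule
  let J := (⁅π.ker, (⊤ : LieIdeal K (FreeLieAlgebra K X))⁆ : LieIdeal K _).toSubmodule
  let A := TrivialLieModule K L K
  let ι : (P ⧸ J.comap P.subtype) →ₗ[K] KerLieQuotient π := Submodule.mapQ _ J P.subtype le_rfl
  have hι : LinearMap.ker ι = ⊥ := Submodule.ker_liftQ_eq_bot _ _ _ (by
    rw [LinearMap.ker_comp, Submodule.ker_mkQ])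
  obtain ⟨r, hr⟩ := ι.exists_leftInverse_of_injective hι
  have hsurj : Function.Surjective (LinearMap.lcomp K A ι) := fun χ =>
    ⟨χ ∘ₗ r, by rw [LinearMap.lcomp_apply', LinearMap.comp_assoc, hr, LinearMap.comp_id]⟩
  have hker : LinearMap.ker (LinearMap.lcomp K A ι) = LinearMap.ker (transgression A hs) := by
    ext θ
    rw [mem_ker_transgression_iff_forall_mem_ker_inf, LinearMap.mem_ker]
    constructor
    · exact fun h y hy => LinearMap.congr_fun h (Submodule.Quotient.mk ⟨y, hy⟩)
    · exact fun h => Submodule.linearMap_qext _ (LinearMap.ext fun y => h y y.2)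
  calc lieSchurMultiplierDim K X π = finrank K (Dual K (P ⧸ J.comap P.subtype)) :=
        (Subspace.dual_finrank_eq).symm
    _ = finrank K ((P ⧸ J.comap P.subtype) →ₗ[K] A) :=
        (LinearEquiv.congrRight (TrivialLieModule.equiv K L K).symm).finrank_eq
    _ = finrank K (lieH2 K L A) :=
        finrank_eq_of_surjective_of_ker_eq hsurj (transgression_surjective hs) hker

section TwoCochain

variable {ι R L A : Type*} [CommRing R] [LieRing L] [LieAlgebra R L] [AddCommGroup A] [Module R A]

theorem twoCochain_ext_basis [LinearOrder ι] (b : Basis ι R L) {c c' : twoCochain R L A}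
    (h : ∀ i j, i < j → c (b i) (b j) = c' (b i) (b j)) : c = c' := by
  refine Subtype.ext (b.ext fun i => b.ext fun j => ?_)
  change c (b i) (b j) = c' (b i) (b j)
  rcases lt_trichotomy i j with hij | rfl | hij
  · exact h i j hij
  · rw [twoCochain_alt, twoCochain_alt]
  · rw [← twoCochain_skew, ← twoCochain_skew c', h j i hij]

/-- The `2`-cochain `(f ∧ g) ⊗ a`, from which cocycles are built in terms of a dual basis. -/
def wedgeSMul (f g : Dual R L) (a : A) : twoCochain R L A :=
  ⟨LinearMap.mk₂ R (fun u v => (f u * g v - g u * f v) • a)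
      (fun _ _ _ => by simp only [map_add, ← add_smul]; ring_nf)
      (fun _ _ _ => by simp only [map_smul, smul_eq_mul, smul_smul]; ring_nf)
      (fun _ _ _ => by simp only [map_add, ← add_smul]; ring_nf)
      (fun _ _ _ => by simp only [map_smul, smul_eq_mul, smul_smul]; ring_nf),
    fun u => by simp only [LinearMap.mk₂_apply, mul_comm, sub_self, zero_smul]⟩

theorem wedgeSMul_apply (f g : Dual R L) (a : A) (u v : L) :
    wedgeSMul f g a u v = (f u * g v - g u * f v) • a := rfl

end TwoCochain

section Filiform

variable {K L : Type*} [CommRing K] [LieRing L] [LieAlgebra K L]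

/-- A family `x₀, …, x₄` whose only nonzero brackets are `[x₀, x₁] = x₂`, `[x₀, x₂] = x₃` and
`[x₀, x₃] = x₄`, i.e. which satisfies the relations of `L_{5,7}` (indexed from `0`). -/
structure IsFiliform (x : Fin 5 → L) : Prop where
  lie_zero_one : ⁅x 0, x 1⁆ = x 2
  lie_zero_two : ⁅x 0, x 2⁆ = x 3
  lie_zero_three : ⁅x 0, x 3⁆ = x 4
  lie_zero_four : ⁅x 0, x 4⁆ = 0
  lie_of_ne_zero {i j : Fin 5} (hi : i ≠ 0) (hj : j ≠ 0) : ⁅x i, x j⁆ = 0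

namespace IsFiliform

theorem lie_sum_smul {x : Fin 5 → L} (hx : IsFiliform x) (p q : Fin 5 → K) :
    ⁅∑ i, p i • x i, ∑ i, q i • x i⁆ = (p 0 * q 1 - p 1 * q 0) • x 2 +
      (p 0 * q 2 - p 2 * q 0) • x 3 + (p 0 * q 3 - p 3 * q 0) • x 4 := by
  have lie_zero_right (i : Fin 5) : ⁅x i, x 0⁆ = -⁅x 0, x i⁆ := (lie_skew _ _).symm
  simp only [Fin.sum_univ_five, add_lie, lie_add, smul_lie, lie_smul, lie_self, lie_zero_right,
    hx.lie_zero_one, hx.lie_zero_two, hx.lie_zero_three, hx.lie_zero_four,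
    hx.lie_of_ne_zero, ne_eq, Fin.reduceEq, not_false_eq_true]
  module

variable {b : Basis (Fin 5) K L}

theorem lie_eq (hb : IsFiliform b) (u v : L) :
    ⁅u, v⁆ = (b.coord 0 u * b.coord 1 v - b.coord 1 u * b.coord 0 v) • b 2 +
      (b.coord 0 u * b.coord 2 v - b.coord 2 u * b.coord 0 v) • b 3 +
      (b.coord 0 u * b.coord 3 v - b.coord 3 u * b.coord 0 v) • b 4 := by
  conv_lhs => rw [← b.sum_repr u, ← b.sum_repr v]
  exact hb.lie_sum_smul _ _

theorem coord_lie (hb : IsFiliform b) (u v : L) (k : Fin 5) :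
    b.coord k ⁅u, v⁆ = ![0, 0, b.coord 0 u * b.coord 1 v - b.coord 1 u * b.coord 0 v,
      b.coord 0 u * b.coord 2 v - b.coord 2 u * b.coord 0 v,
      b.coord 0 u * b.coord 3 v - b.coord 3 u * b.coord 0 v] k := by
  rw [hb.lie_eq]
  fin_cases k <;> simp

theorem coord_eq_zero_of_mem_lowerCentralSeries (hb : IsFiliform b) {k : ℕ} {v : L}
    (hv : v ∈ lowerCentralSeries K L L (k + 1)) {i : Fin 5} (hi : (i : ℕ) ≤ k + 1) :
    b.coord i v = 0 := by
  suffices h : (lowerCentralSeries K L L (k + 1)).toSubmodule ≤ LinearMap.ker (b.coord i) from h hv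
  clear hv
  induction k generalizing i with
  | zero =>
    refine lowerCentralSeries_succ_le_of_lie_mem fun u w _ => ?_
    rw [LinearMap.mem_ker, hb.coord_lie]
    obtain rfl | rfl : i = 0 ∨ i = 1 := by lia
    · rfl
    · rfl
  | succ k ih =>
    refine lowerCentralSeries_succ_le_of_lie_mem fun u w hw => ?_
    have coord_w {j : Fin 5} (hj : (j : ℕ) ≤ k + 1) : b.coord j w = 0 := ih hj hw
    rw [LinearMap.mem_ker, hb.coord_lie, coord_w (j := 0) (by simp), coord_w (j := 1) (by simp)]
    fin_cases i
    · rfl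
    · rfl
    · simp
    · simp [coord_w (j := 2) (Nat.le_of_succ_le_succ hi)]
    · simp [coord_w (j := 3) (Nat.le_of_succ_le_succ hi)]

theorem apply_mem_lowerCentralSeries (hb : IsFiliform b) :
    b 2 ∈ lowerCentralSeries K L L 1 ∧ b 3 ∈ lowerCentralSeries K L L 2 ∧
      b 4 ∈ lowerCentralSeries K L L 3 := by
  have two_mem : b 2 ∈ lowerCentralSeries K L L 1 :=
    hb.lie_zero_one ▸ lie_mem_lowerCentralSeries_one _ _
  have three_mem : b 3 ∈ lowerCentralSeries K L L 2 :=
    hb.lie_zero_two ▸ lie_mem_lowerCentralSeries_succ_s16 _ two_mem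
  exact ⟨two_mem, three_mem, hb.lie_zero_three ▸ lie_mem_lowerCentralSeries_succ_s16 _ three_mem⟩

theorem lowerCentralSeries_one_eq_span (hb : IsFiliform b) :
    (lowerCentralSeries K L L 1).toSubmodule =
      Submodule.span K (Set.range (b ∘ (Fin.natAdd 2 : Fin 3 → Fin 5))) := by
  refine le_antisymm (lowerCentralSeries_succ_le_of_lie_mem fun u v _ => ?_) ?_
  · have mem_span (i : Fin 3) : b (Fin.natAdd 2 i) ∈
        Submodule.span K (Set.range (b ∘ (Fin.natAdd 2 : Fin 3 → Fin 5))) :=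
      Submodule.subset_span ⟨i, rfl⟩
    rw [hb.lie_eq]
    exact add_mem (add_mem (Submodule.smul_mem _ _ (mem_span 0))
      (Submodule.smul_mem _ _ (mem_span 1))) (Submodule.smul_mem _ _ (mem_span 2))
  · obtain ⟨two_mem, three_mem, four_mem⟩ := hb.apply_mem_lowerCentralSeries
    rw [Submodule.span_le]
    rintro _ ⟨i, rfl⟩
    fin_cases i
    · exact two_mem
    · exact antitone_lowerCentralSeries K L L (by decide : 1 ≤ 2) three_mem
    · exact antitone_lowerCentralSeries K L L (by decide : 1 ≤ 3) four_mem

variable {A : Type*} [AddCommGroup A] [Module K A] [LieRingModule L A] [LieModule K L A]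

variable (b A) in
/-- The coordinates `(c(x₀, x₄), c(x₁, x₂), c(x₁, x₄))` of a `2`-cocycle `c` relative to the basis
`x = b`; for filiform `b` they classify `c` up to coboundaries. -/
noncomputable def twoCocycleCoords : twoCocycle K L A →ₗ[K] A × A × A :=
  let eval (i j : Fin 5) : twoCocycle K L A →ₗ[K] A :=
    { toFun c := (c : twoCochain K L A) (b i) (b j)
      map_add' _ _ := rfl
      map_smul' _ _ := rfl }
  (eval 0 4).prod ((eval 1 2).prod (eval 1 4))

theorem twoCocycleCoords_apply (c : twoCocycle K L A) :
    twoCocycleCoords b A c = ((c : twoCochain K L A) (b 0) (b 4),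
      (c : twoCochain K L A) (b 1) (b 2), (c : twoCochain K L A) (b 1) (b 4)) := rfl

variable [LieModule.IsTrivial L A]

theorem wedgeSMul_mem_twoCocycle (hb : IsFiliform b) (a₀₄ a₁₂ a₁₄ : A) :
    wedgeSMul (b.coord 0) (b.coord 4) a₀₄ + wedgeSMul (b.coord 1) (b.coord 2) a₁₂ +
      (wedgeSMul (b.coord 1) (b.coord 4) a₁₄ + wedgeSMul (b.coord 2) (b.coord 3) (-a₁₄)) ∈
    twoCocycle K L A := by
  rw [mem_twoCocycle_iff_of_trivial]
  intro x y z
  simp only [add_apply_apply, wedgeSMul_apply, hb.coord_lie, Matrix.cons_val]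
  module

theorem twoCocycle_apply_relations (hb : IsFiliform b) (c : twoCocycle K L A) :
    (c : twoCochain K L A) (b 1) (b 3) = 0 ∧
    (c : twoCochain K L A) (b 2) (b 3) = -(c : twoCochain K L A) (b 1) (b 4) ∧
    (c : twoCochain K L A) (b 2) (b 4) = 0 ∧ (c : twoCochain K L A) (b 3) (b 4) = 0 := by
  have cocycle := (mem_twoCocycle_iff_of_trivial K L A c.1).1 c.2
  have h₀₁₂ := cocycle (b 0) (b 1) (b 2)
  have h₀₁₃ := cocycle (b 0) (b 1) (b 3)
  have h₀₂₃ := cocycle (b 0) (b 2) (b 3)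
  have h₀₂₄ := cocycle (b 0) (b 2) (b 4)
  simp only [hb.lie_zero_one, hb.lie_zero_two, hb.lie_zero_three, hb.lie_zero_four,
    hb.lie_of_ne_zero, ne_eq, Fin.reduceEq, not_false_eq_true, twoCochain_alt, map_zero,
    zero_add, add_zero] at h₀₁₂ h₀₁₃ h₀₂₃ h₀₂₄
  exact ⟨h₀₁₂.symm, eq_neg_of_add_eq_zero_left h₀₁₃.symm, h₀₂₃.symm, h₀₂₄.symm⟩

theorem twoCocycleCoords_surjective (hb : IsFiliform b) :
    Function.Surjective (twoCocycleCoords b A) := by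
  rintro ⟨a₀₄, a₁₂, a₁₄⟩
  refine ⟨⟨_, hb.wedgeSMul_mem_twoCocycle a₀₄ a₁₂ a₁₄⟩, ?_⟩
  simp [twoCocycleCoords_apply, wedgeSMul_apply]

theorem ker_twoCocycleCoords (hb : IsFiliform b) :
    LinearMap.ker (twoCocycleCoords b A) =
      (LinearMap.range (d₁₂ K L A)).submoduleOf (twoCocycle K L A) := by
  ext c
  rw [LinearMap.mem_ker, twoCocycleCoords_apply, Prod.mk_eq_zero, Prod.mk_eq_zero]
  constructor
  · rintro ⟨h₀₄, h₁₂, h₁₄⟩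
    obtain ⟨h₁₃, h₂₃, h₂₄, h₃₄⟩ := hb.twoCocycle_apply_relations c
    let f : L →ₗ[K] A := b.constr K ![0, 0, -(c : twoCochain K L A) (b 0) (b 1),
      -(c : twoCochain K L A) (b 0) (b 2), -(c : twoCochain K L A) (b 0) (b 3)]
    refine ⟨f, twoCochain_ext_basis b fun i j hij => ?_⟩
    rw [d₁₂_apply_apply_ofTrivial]
    fin_cases i <;> fin_cases j <;> simp at hij <;>
      simp [f, hb.lie_zero_one, hb.lie_zero_two, hb.lie_zero_three, hb.lie_zero_four,
        hb.lie_of_ne_zero, h₀₄, h₁₂, h₁₃, h₁₄, h₂₃, h₂₄, h₃₄]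
  · rintro ⟨f, hf⟩
    have apply_eq (i j : Fin 5) : (c : twoCochain K L A) (b i) (b j) = -f ⁅b i, b j⁆ := by
      rw [← d₁₂_apply_apply_ofTrivial, hf]; rfl
    simp [apply_eq, hb.lie_zero_four, hb.lie_of_ne_zero]

end IsFiliform

end Filiform

theorem IsFiliform.finrank_lieH2 {K L : Type*} [Field K] [LieRing L] [LieAlgebra K L]
    {b : Basis (Fin 5) K L} (hb : IsFiliform b) (A : Type*) [AddCommGroup A] [Module K A]
    [LieRingModule L A] [LieModule K L A] [LieModule.IsTrivial L A] [FiniteDimensional K A] :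
    finrank K (lieH2 K L A) = 3 * finrank K A := by
  calc finrank K (lieH2 K L A) = finrank K (A × A × A) :=
        finrank_eq_of_surjective_of_ker_eq (Submodule.mkQ_surjective _)
          hb.twoCocycleCoords_surjective (by rw [Submodule.ker_mkQ, hb.ker_twoCocycleCoords])
    _ = 3 * finrank K A := by rw [finrank_prod, finrank_prod]; ring

section FiliformInvariants

variable {K L : Type} [Field K] [LieRing L] [LieAlgebra K L] {b : Basis (Fin 5) K L}

theorem IsFiliform.lieDerivedDim_eq_three (hb : IsFiliform b) : lieDerivedDim K L = 3 := by
  have hli : LinearIndependent K (b ∘ (Fin.natAdd 2 : Fin 3 → Fin 5)) :=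
    b.linearIndependent.comp _ (Fin.natAdd_injective 3 2)
  change finrank K (lowerCentralSeries K L L 1).toSubmodule = 3
  rw [hb.lowerCentralSeries_one_eq_span, finrank_span_eq_card hli, Fintype.card_fin]

theorem IsFiliform.lieNilpotencyClass_four (hb : IsFiliform b) : lieNilpotencyClass K L 4 := by
  refine ⟨(LieSubmodule.eq_bot_iff _).2 fun v hv => ?_, fun k hk hbot => b.ne_zero 4 ?_⟩
  · exact b.forall_coord_eq_zero_iff.1 fun i =>
      hb.coord_eq_zero_of_mem_lowerCentralSeries hv (Nat.le_of_lt_succ i.2)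
  · exact (LieSubmodule.eq_bot_iff _).1 hbot _ <|
      antitone_lowerCentralSeries K L L (Nat.le_of_lt_succ hk) hb.apply_mem_lowerCentralSeries.2.2

theorem IsFiliform.lieSchurMultiplierDim_eq_three (hb : IsFiliform b) {X : Type}
    {π : FreeLieAlgebra K X →ₗ⁅K⁆ L} (hπ : Function.Surjective π) :
    lieSchurMultiplierDim K X π = 3 := by
  have : FiniteDimensional K (TrivialLieModule K L K) :=
    Module.Finite.equiv (TrivialLieModule.equiv K L K).symm
  rw [lieSchurMultiplierDim_eq_finrank_lieH2 hπ, hb.finrank_lieH2,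
    (TrivialLieModule.equiv K L K).finrank_eq, finrank_self]

end FiliformInvariants

section FiliformMatrix

variable (K : Type*) [CommRing K]

/-- A faithful representation of `L_{5,7}`: `x₀` acts on `K⁴` as a nilpotent Jordan block, and
`x₁, …, x₄` are the translations of `K⁴` by the basis vectors, in affine `5 × 5` matrices. -/
def filiformMatrix : Fin 5 → Matrix (Fin 5) (Fin 5) K :=
  ![.single 1 0 1 + .single 2 1 1 + .single 3 2 1, .single 0 4 1, .single 1 4 1, .single 2 4 1,
    .single 3 4 1]

attribute [local instance] LieRing.ofAssociativeRing in
theorem isFiliform_filiformMatrix : IsFiliform (filiformMatrix K) where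
  lie_zero_one := by simp [filiformMatrix, Ring.lie_def, add_mul, mul_add]
  lie_zero_two := by simp [filiformMatrix, Ring.lie_def, add_mul, mul_add]
  lie_zero_three := by simp [filiformMatrix, Ring.lie_def, add_mul, mul_add]
  lie_zero_four := by simp [filiformMatrix, Ring.lie_def, add_mul, mul_add]
  lie_of_ne_zero {i j} hi hj := by
    fin_cases i <;> fin_cases j <;> simp [filiformMatrix, Ring.lie_def] at hi hj ⊢

theorem linearIndependent_filiformMatrix : LinearIndependent K (filiformMatrix K) := by
  rw [Fintype.linearIndependent_iff]
  intro g hg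
  have entry (k l : Fin 5) : ∑ i, g i * filiformMatrix K i k l = 0 := by
    simpa [Matrix.sum_apply] using congrFun₂ hg k l
  simp only [filiformMatrix, Fin.sum_univ_five] at entry
  intro i
  fin_cases i
  · simpa using entry 1 0
  · simpa using entry 0 4
  · simpa using entry 1 4
  · simpa using entry 2 4
  · simpa using entry 3 4

end FiliformMatrix

section Relators

variable (K : Type*) [CommRing K]

/-- The relators in the presentation of `L_{5,7}`, as listed in `lieL57`. -/
def lieL57Relators : Set (FreeLieAlgebra K (Fin 5)) :=
  let x := FreeLieAlgebra.of K
  {⁅x 0, x 1⁆ - x 2, ⁅x 0, x 2⁆ - x 3, ⁅x 0, x 3⁆ - x 4, ⁅x 0, x 4⁆,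
   ⁅x 1, x 2⁆, ⁅x 1, x 3⁆, ⁅x 1, x 4⁆, ⁅x 2, x 3⁆, ⁅x 2, x 4⁆, ⁅x 3, x 4⁆}

theorem isFiliform_iff_forall_mem_lieL57Relators {L : Type*} [LieRing L] [LieAlgebra K L]
    {x : Fin 5 → L} :
    IsFiliform x ↔ ∀ r ∈ lieL57Relators K, FreeLieAlgebra.lift K x r = 0 := by
  simp only [lieL57Relators, Set.mem_insert_iff, Set.mem_singleton_iff, forall_eq_or_imp, forall_eq,
    map_sub, LieHom.map_lie, FreeLieAlgebra.lift_of_apply, sub_eq_zero]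
  constructor
  · intro hx
    exact ⟨hx.lie_zero_one, hx.lie_zero_two, hx.lie_zero_three, hx.lie_zero_four, by
      simp [hx.lie_of_ne_zero]⟩
  · rintro ⟨h₀₁, h₀₂, h₀₃, h₀₄, h₁₂, h₁₃, h₁₄, h₂₃, h₂₄, h₃₄⟩
    refine ⟨h₀₁, h₀₂, h₀₃, h₀₄, fun {i j} hi hj => ?_⟩
    wlog hij : i < j generalizing i j
    · rcases (not_lt.1 hij).eq_or_lt with rfl | hji
      · exact lie_self _
      · rw [← lie_skew, this hj hi hji, neg_zero]
    fin_cases i <;> fin_cases j <;> simp at hi hij <;> assumption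

end Relators

section L57

variable (K : Type) [Field K]

/-- The defining projection onto `L_{5,7}` from the free Lie algebra on its generators. -/
noncomputable def lieL57Mk : FreeLieAlgebra K (Fin 5) →ₗ⁅K⁆ lieL57 K :=
  { (LieSubmodule.lieSpan K _ (lieL57Relators K)).toSubmodule.mkQ with map_lie' := rfl }

theorem lieL57Mk_surjective : Function.Surjective (lieL57Mk K) :=
  Submodule.mkQ_surjective (LieSubmodule.lieSpan K _ (lieL57Relators K)).toSubmodule

theorem ker_lieL57Mk : (lieL57Mk K).ker = LieSubmodule.lieSpan K _ (lieL57Relators K) :=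
  SetLike.ext fun _ => Submodule.Quotient.mk_eq_zero (LieSubmodule.toSubmodule _)

/-- The images `x₀, …, x₄` in `L_{5,7}` of the free generators. -/
noncomputable def lieL57Gen (i : Fin 5) : lieL57 K := lieL57Mk K (FreeLieAlgebra.of K i)

theorem isFiliform_lieL57Gen : IsFiliform (lieL57Gen K) := by
  rw [isFiliform_iff_forall_mem_lieL57Relators K]
  intro r hr
  have hlift : FreeLieAlgebra.lift K (lieL57Gen K) = lieL57Mk K := FreeLieAlgebra.lift_comp_of _
  rw [hlift, ← LieHom.mem_ker, ker_lieL57Mk]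
  exact LieSubmodule.subset_lieSpan hr

theorem span_range_lieL57Gen : Submodule.span K (Set.range (lieL57Gen K)) = ⊤ := by
  have hgen (i : Fin 5) : lieL57Gen K i ∈ Submodule.span K (Set.range (lieL57Gen K)) :=
    Submodule.subset_span ⟨i, rfl⟩
  let S : LieSubalgebra K (lieL57 K) :=
    { Submodule.span K (Set.range (lieL57Gen K)) with
      lie_mem' := fun {u v} hu hv => by
        obtain ⟨p, rfl⟩ := (Submodule.mem_span_range_iff_exists_fun K).1 hu
        obtain ⟨q, rfl⟩ := (Submodule.mem_span_range_iff_exists_fun K).1 hv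
        rw [(isFiliform_lieL57Gen K).lie_sum_smul]
        exact add_mem (add_mem (Submodule.smul_mem _ _ (hgen 2)) (Submodule.smul_mem _ _ (hgen 3)))
          (Submodule.smul_mem _ _ (hgen 4)) }
  let φ : FreeLieAlgebra K (Fin 5) →ₗ⁅K⁆ S := FreeLieAlgebra.lift K fun i => ⟨_, hgen i⟩
  have hφ : S.incl.comp φ = lieL57Mk K := FreeLieAlgebra.hom_ext fun i =>
    congrArg Subtype.val (FreeLieAlgebra.lift_of_apply _ i)
  refine Submodule.eq_top_iff'.2 fun u => ?_
  obtain ⟨y, rfl⟩ := lieL57Mk_surjective K u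
  rw [← hφ]
  exact (φ y).2

variable {K} in
theorem IsFiliform.exists_linearMap_lieL57Gen {L : Type*} [LieRing L] [LieAlgebra K L]
    {x : Fin 5 → L} (hx : IsFiliform x) : ∃ f : lieL57 K →ₗ[K] L, f ∘ lieL57Gen K = x := by
  have hker : (lieL57Mk K).ker ≤ (FreeLieAlgebra.lift K x).ker := by
    rw [ker_lieL57Mk, LieSubmodule.lieSpan_le]
    exact (isFiliform_iff_forall_mem_lieL57Relators K).1 hx
  obtain ⟨f, hf⟩ := exists_comp_eq_of_ker_le (g := (lieL57Mk K).toLinearMap)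
    (θ := (FreeLieAlgebra.lift K x).toLinearMap) hker
  exact ⟨f, funext fun i => (LinearMap.congr_fun hf _).trans (FreeLieAlgebra.lift_of_apply x i)⟩

attribute [local instance] LieRing.ofAssociativeRing in
theorem linearIndependent_lieL57Gen : LinearIndependent K (lieL57Gen K) := by
  obtain ⟨f, hf⟩ := (isFiliform_filiformMatrix K).exists_linearMap_lieL57Gen (K := K)
  exact .of_comp f (hf ▸ linearIndependent_filiformMatrix K)

/-- The basis of `L_{5,7}` given by its generators. -/
noncomputable def lieL57Basis : Basis (Fin 5) K (lieL57 K) :=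
  .mk (linearIndependent_lieL57Gen K) (span_range_lieL57Gen K).ge

theorem isFiliform_lieL57Basis : IsFiliform (lieL57Basis K) := by
  rw [lieL57Basis, Basis.coe_mk]
  exact isFiliform_lieL57Gen K

end L57

/-- `L_{5,7}` is nilpotent of maximal class `4` with `dim L² = 3`, its
Schur multiplier has dimension `3`, and with `n = 5`, `m = 3`, `c = 4` this equals
`(1/2)(n−m−1)(n+m) − Σ_{i=2}^{min(n−m,c)} (n−m−i) − 1`. -/
theorem schur_multiplier_L57 (K : Type) [Field K] :
    Module.finrank K (lieL57 K) = 5 ∧ lieDerivedDim K (lieL57 K) = 3 ∧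
    lieNilpotencyClass K (lieL57 K) 4 ∧
    (∀ (X : Type) (π : FreeLieAlgebra K X →ₗ⁅K⁆ lieL57 K), Function.Surjective π →
      lieSchurMultiplierDim K X π = 3) ∧
    (3 : ℤ) = raiBound 5 3 4 - 1 := by
  have hb := isFiliform_lieL57Basis K
  refine ⟨finrank_eq_card_basis (lieL57Basis K), hb.lieDerivedDim_eq_three,
    hb.lieNilpotencyClass_four, fun _ _ hπ => hb.lieSchurMultiplierDim_eq_three hπ, by decide⟩
end
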